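/- arXiv:2202.10383 — 5 statements merged into one kernel-verified Lean document; each statement's English description precedes it below -/
import Mathlib

section
/- Soundness: if a scheme is provable from a set of true schemes, then it is true. -/
set_option autoImplicit false

/-! ## Megill-style scheme-level formalization of first-order logic -/

/-- Metavariables: variable metavariables `vr i` (standing for x_i) and
formula metavariables `fm i` (standing for φ_i). -/
inductive MV : Type
  | vr (i : ℕ) : MV
  | fm (i : ℕ) : MV
  deriving DecidableEq

/-- Metaformulas over the pure language of equality. -/
inductive MF : Type
  | phi (i : ℕ) : MF
  | eq (i j : ℕ) : MF
  | imp (a b : MF) : MF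
  | not (a : MF) : MF
  | all (i : ℕ) (a : MF) : MF
  deriving DecidableEq

/-- The set of metavariables occurring in a metaformula. -/
def MF.OC : MF → Set MV
  | .phi i => {MV.fm i}
  | .eq i j => {MV.vr i, MV.vr j}
  | .imp a b => a.OC ∪ b.OC
  | .not a => a.OC
  | .all i a => insert (MV.vr i) a.OC

/-- A scheme: finitely many hypotheses, a conclusion, and disjoint-variable
(DV) conditions given as unordered pairs of metavariables. -/
structure Scheme : Type where
  hyps : Finset MF
  concl : MF
  dv : Set (Sym2 MV)

/-- Metavariables occurring in a scheme (in its hypotheses or conclusion). -/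
def Scheme.OC (Φ : Scheme) : Set MV :=
  {m | ∃ h ∈ Φ.hyps, m ∈ h.OC} ∪ Φ.concl.OC

/-- A (type-preserving) substitution: variable metavariables go to variable
metavariables, formula metavariables go to metaformulas; it is the identity
outside a finite set. -/
structure Subst : Type where
  vr : ℕ → ℕ
  fm : ℕ → MF
  finVr : {i : ℕ | vr i ≠ i}.Finite
  finFm : {i : ℕ | fm i ≠ MF.phi i}.Finite

/-- Action of a substitution on a metaformula. -/
def MF.substMF (σ : Subst) : MF → MF
  | .phi i => σ.fm i
  | .eq i j => .eq (σ.vr i) (σ.vr j)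
  | .imp a b => .imp (a.substMF σ) (b.substMF σ)
  | .not a => .not (a.substMF σ)
  | .all i a => .all (σ.vr i) (a.substMF σ)

/-- The set of metavariables occurring in the image of a metavariable. -/
def Subst.appMV (σ : Subst) : MV → Set MV
  | .vr i => {MV.vr (σ.vr i)}
  | .fm i => (σ.fm i).OC

/-- σ is the identity on a given metavariable. -/
def Subst.Fixes (σ : Subst) : MV → Prop
  | .vr i => σ.vr i = i
  | .fm i => σ.fm i = MF.phi i

/-- A substitution is legitimate on a scheme if it does not violate its
DV conditions. -/
def Subst.Legit (σ : Subst) (Φ : Scheme) : Prop :=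
  ∀ m n : MV, s(m, n) ∈ Φ.dv → σ.appMV m ∩ σ.appMV n = ∅

/-- Propagation of DV conditions along a substitution. -/
def Subst.dvMap (σ : Subst) (D : Set (Sym2 MV)) : Set (Sym2 MV) :=
  {q | ∃ m' n' m n : MV, s(m', n') ∈ D ∧ m ∈ σ.appMV m' ∧ n ∈ σ.appMV n' ∧ q = s(m, n)}

/-- Action of a substitution on a scheme. -/
def Scheme.substS (Φ : Scheme) (σ : Subst) : Scheme :=
  ⟨Φ.hyps.image (MF.substMF σ), Φ.concl.substMF σ, σ.dvMap Φ.dv⟩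

/-- `Φ.Inst Ψ` : Ψ is an instance of Φ, i.e. the result of a legitimate
substitution, possibly followed by the addition of DV conditions. -/
def Scheme.Inst (Φ Ψ : Scheme) : Prop :=
  ∃ σ : Subst, σ.Legit Φ ∧ Ψ.hyps = Φ.hyps.image (MF.substMF σ) ∧
    Ψ.concl = Φ.concl.substMF σ ∧ σ.dvMap Φ.dv ⊆ Ψ.dv

/-- Metavariables occurring in a list of metaformulas. -/
def listOC (P : List MF) : Set MV := {m | ∃ f ∈ P, m ∈ f.OC}

/-- The DV conditions of a proof `P` of the scheme `Φ`: those of `Φ`, plus all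
pairs {m, n} where m is a dummy metavariable of `P` and n occurs in `P`. -/
def proofDV (Φ : Scheme) (P : List MF) : Set (Sym2 MV) :=
  Φ.dv ∪ {q | ∃ m n : MV, m ∈ listOC P ∧ m ∉ Φ.OC ∧ n ∈ listOC P ∧ q = s(m, n)}

/-- `P` is a proof of the scheme `Φ` from the set `S` of schemes. -/
def IsProof (S : Set Scheme) (Φ : Scheme) (P : List MF) : Prop :=
  P ≠ [] ∧ P.getLast? = some Φ.concl ∧
  ∀ (k : ℕ) (hk : k < P.length),
    P.get ⟨k, hk⟩ ∈ Φ.hyps ∨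
    ∃ hs : Finset MF,
      (∀ h ∈ hs, ∃ (l : ℕ) (hl : l < k), P.get ⟨l, hl.trans hk⟩ = h) ∧
      ∃ Ξ ∈ S, Ξ.Inst ⟨hs, P.get ⟨k, hk⟩, proofDV Φ P⟩

/-- `S ⊢ Φ` : the scheme `Φ` is provable from the set `S` of schemes. -/
def Provable (S : Set Scheme) (Φ : Scheme) : Prop := ∃ P : List MF, IsProof S Φ P

/-! ## Object level: first-order formulas and semantics -/

/-- First-order formulas over the pure language of equality, with
individual variables v_i. -/
inductive FM : Type
  | eq (i j : ℕ) : FM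
  | imp (a b : FM) : FM
  | not (a : FM) : FM
  | all (i : ℕ) (a : FM) : FM
  deriving DecidableEq

/-- Variables occurring in a first-order formula. -/
def FM.vars : FM → Set ℕ
  | .eq i j => {i, j}
  | .imp a b => a.vars ∪ b.vars
  | .not a => a.vars
  | .all i a => insert i a.vars

/-- An object-substitution: variable metavariables go to individual variables,
formula metavariables go to first-order formulas. -/
structure OSubst : Type where
  vr : ℕ → ℕ
  fm : ℕ → FM

/-- Action of an object-substitution on a metaformula, yielding a first-order
formula (an object-instance). -/
def MF.osubst (τ : OSubst) : MF → FM
  | .phi i => τ.fm i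
  | .eq i j => .eq (τ.vr i) (τ.vr j)
  | .imp a b => .imp (a.osubst τ) (b.osubst τ)
  | .not a => .not (a.osubst τ)
  | .all i a => .all (τ.vr i) (a.osubst τ)

/-- Variables occurring in the image of a metavariable. -/
def OSubst.appVars (τ : OSubst) : MV → Set ℕ
  | .vr i => {τ.vr i}
  | .fm i => (τ.fm i).vars

/-- An object-substitution is legitimate on a scheme if images of DV-paired
metavariables share no variables. -/
def OSubst.Legit (τ : OSubst) (Φ : Scheme) : Prop :=
  ∀ m n : MV, s(m, n) ∈ Φ.dv → τ.appVars m ∩ τ.appVars n = ∅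

/-- Evaluation of a first-order formula in a structure with domain `D`
(equality interpreted as equality) under an assignment `ρ`. -/
def FM.eval {D : Type} (ρ : ℕ → D) : FM → Prop
  | .eq i j => ρ i = ρ j
  | .imp a b => a.eval ρ → b.eval ρ
  | .not a => ¬ a.eval ρ
  | .all i a => ∀ d : D, a.eval (Function.update ρ i d)

/-- Validity of a first-order formula in the structure with domain `D`. -/
def FM.Valid (D : Type) (f : FM) : Prop := ∀ ρ : ℕ → D, f.eval ρ

/-- A scheme is true if for every legitimate object-instance and every
nonempty domain, the conclusion is valid whenever all hypotheses are. -/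
def Scheme.IsTrue (Φ : Scheme) : Prop :=
  ∀ τ : OSubst, τ.Legit Φ →
    ∀ D : Type, Nonempty D →
      (∀ h ∈ Φ.hyps, FM.Valid D (h.osubst τ)) → FM.Valid D (Φ.concl.osubst τ)

/-! ## (i,j)-transforms and supertruth -/

/-- Auxiliary: (i,j)-transform with a flag recording whether we are inside the
scope of a quantifier ∀x_i. -/
def MF.transfAux (i j : ℕ) : MF → Bool → MF
  | .phi k, _ => .phi k
  | .eq a b, ins =>
      .eq (if ins = true ∧ a = j then i else a) (if ins = true ∧ b = j then i else b)
  | .imp a b, ins => .imp (a.transfAux i j ins) (b.transfAux i j ins)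
  | .not a, ins => .not (a.transfAux i j ins)
  | .all k a, ins =>
      .all (if ins = true ∧ k = j then i else k) (a.transfAux i j (ins || decide (k = i)))

/-- The (i,j)-transform of a metaformula: replace every occurrence of x_j
lying within the scope of a quantifier ∀x_i by x_i. -/
def MF.transform (i j : ℕ) (f : MF) : MF := f.transfAux i j false

/-- The (i,j)-transform of a scheme: transform hypotheses and conclusion,
keep the DV conditions. -/
def Scheme.transform (i j : ℕ) (Φ : Scheme) : Scheme :=
  ⟨Φ.hyps.image (MF.transform i j), Φ.concl.transform i j, Φ.dv⟩

/-- The (i,j)-transform (and the {i,j}-transform) is legitimate on a scheme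
if {x_i, x_j} is not among its DV conditions. -/
def Scheme.TLegit (i j : ℕ) (Φ : Scheme) : Prop := s(MV.vr i, MV.vr j) ∉ Φ.dv

/-- A (hypothesis-free) scheme is presupertrue if all the legitimate
(i,j)-transforms of all its instances (including itself) are true. -/
def Scheme.PreST (Φ : Scheme) : Prop :=
  ∀ Ψ : Scheme, (Ψ = Φ ∨ Φ.Inst Ψ) → ∀ i j : ℕ, Ψ.TLegit i j → (Ψ.transform i j).IsTrue

/-- A scheme is supertrue if every instance of it (including itself) satisfies:
whenever all legitimate (i,j)-transforms of all instances of each of its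
hypotheses (taken as hypothesis-free schemes with the inherited DV conditions)
are true, all legitimate (i,j)-transforms of all instances of its conclusion
are true. -/
def Scheme.Supertrue (Φ : Scheme) : Prop :=
  ∀ Ψ : Scheme, (Ψ = Φ ∨ Φ.Inst Ψ) →
    (∀ h ∈ Ψ.hyps, Scheme.PreST ⟨∅, h, Ψ.dv⟩) → Scheme.PreST ⟨∅, Ψ.concl, Ψ.dv⟩

/-- The {i,j}-transform of a metaformula: the composite of the (i,j)-transform
and the (j,i)-transform, the one with smaller first index performed first. -/
def MF.stransform (i j : ℕ) (f : MF) : MF :=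
  if i ≤ j then (f.transform i j).transform j i else (f.transform j i).transform i j

/-- The {i,j}-transform of a scheme. -/
def Scheme.stransform (i j : ℕ) (Φ : Scheme) : Scheme :=
  ⟨Φ.hyps.image (MF.stransform i j), Φ.concl.stransform i j, Φ.dv⟩

/-- A metaformula contains no formula metavariables. -/
def MF.FmFree : MF → Prop
  | .phi _ => False
  | .eq _ _ => True
  | .imp a b => a.FmFree ∧ b.FmFree
  | .not a => a.FmFree
  | .all _ a => a.FmFree

/-- A scheme contains no formula metavariables. -/
def Scheme.FmFree (Φ : Scheme) : Prop := (∀ h ∈ Φ.hyps, h.FmFree) ∧ Φ.concl.FmFree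

/-- A (hypothesis-free) scheme is pre-semisupertrue if all the legitimate
{i,j}-transforms of all its instances (including itself) are true. -/
def Scheme.PreSST (Φ : Scheme) : Prop :=
  ∀ Ψ : Scheme, (Ψ = Φ ∨ Φ.Inst Ψ) → ∀ i j : ℕ, Ψ.TLegit i j → (Ψ.stransform i j).IsTrue

/-- A scheme is semisupertrue if it is true and every formula-metavariable-free
instance of it satisfies: whenever all legitimate {i,j}-transforms of all
instances of each of its hypotheses are true, all legitimate {i,j}-transforms
of all instances of its conclusion are true. -/
def Scheme.Semisupertrue (Φ : Scheme) : Prop :=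
  Φ.IsTrue ∧
  ∀ Ψ : Scheme, (Ψ = Φ ∨ Φ.Inst Ψ) → Ψ.FmFree →
    (∀ h ∈ Ψ.hyps, Scheme.PreSST ⟨∅, h, Ψ.dv⟩) → Scheme.PreSST ⟨∅, Ψ.concl, Ψ.dv⟩

/-- A metaformula is quantifier-free. -/
def MF.QFree : MF → Prop
  | .phi _ => True
  | .eq _ _ => True
  | .imp a b => a.QFree ∧ b.QFree
  | .not a => a.QFree
  | .all _ _ => False

/-- A scheme is quantifier-free. -/
def Scheme.QFree (Φ : Scheme) : Prop := (∀ h ∈ Φ.hyps, h.QFree) ∧ Φ.concl.QFree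

/-! ## The axiom schemes of the system TMM
(x = x_0, y = x_1, z = x_2; φ = φ_0, ψ = φ_1, χ = φ_2, θ = φ_3, τ = φ_4) -/

def ax_mp : Scheme := ⟨{.phi 0, .imp (.phi 0) (.phi 1)}, .phi 1, ∅⟩

def ax_minimp : Scheme :=
  ⟨∅, .imp (.phi 0) (.imp (.imp (.phi 1) (.phi 2))
      (.imp (.imp (.imp (.phi 3) (.phi 1)) (.imp (.phi 2) (.phi 4)))
        (.imp (.phi 1) (.phi 4)))), ∅⟩

def ax_peirce : Scheme := ⟨∅, .imp (.imp (.imp (.phi 0) (.phi 1)) (.phi 0)) (.phi 0), ∅⟩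

def ax_contrap : Scheme :=
  ⟨∅, .imp (.imp (.phi 0) (.not (.phi 1))) (.imp (.phi 1) (.not (.phi 0))), ∅⟩

def ax_notelim : Scheme := ⟨∅, .imp (.not (.phi 0)) (.imp (.phi 0) (.phi 1)), ∅⟩

def ax_gen : Scheme := ⟨{.phi 0}, .all 0 (.phi 0), ∅⟩

def ax_ALLdistr : Scheme :=
  ⟨∅, .imp (.all 0 (.imp (.phi 0) (.phi 1))) (.imp (.all 0 (.phi 0)) (.all 0 (.phi 1))), ∅⟩

def ax_spec : Scheme := ⟨∅, .imp (.all 0 (.phi 0)) (.phi 0), ∅⟩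

def ax_modal5 : Scheme :=
  ⟨∅, .imp (.not (.all 0 (.phi 0))) (.all 0 (.not (.all 0 (.phi 0)))), ∅⟩

def ax_vacGen : Scheme := ⟨∅, .imp (.phi 0) (.all 0 (.phi 0)), {s(MV.vr 0, MV.fm 0)}⟩

def ax_ALLcomm : Scheme :=
  ⟨∅, .imp (.all 0 (.all 1 (.phi 0))) (.all 1 (.all 0 (.phi 0))), ∅⟩

def ax_EQrefl : Scheme := ⟨∅, .eq 0 0, ∅⟩

def ax_EQsymm : Scheme := ⟨∅, .imp (.eq 0 1) (.eq 1 0), ∅⟩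

def ax_EQtrans : Scheme := ⟨∅, .imp (.eq 0 1) (.imp (.eq 1 2) (.eq 0 2)), ∅⟩

def ax_denot : Scheme :=
  ⟨∅, .imp (.eq 0 0) (.not (.all 1 (.not (.eq 1 0)))), {s(MV.vr 0, MV.vr 1)}⟩

def ax_subst : Scheme :=
  ⟨∅, .all 0 (.imp (.eq 0 1) (.imp (.phi 0) (.all 0 (.imp (.eq 0 1) (.phi 0))))),
    {s(MV.vr 0, MV.vr 1), s(MV.vr 1, MV.fm 0)}⟩

def ax_ALLeq : Scheme :=
  ⟨∅, .imp (.all 0 (.eq 0 1)) (.imp (.all 0 (.phi 0)) (.all 1 (.phi 0))), ∅⟩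

def ax_genEq : Scheme :=
  ⟨∅, .imp (.not (.all 0 (.eq 0 1)))
      (.imp (.not (.all 0 (.eq 0 2))) (.imp (.eq 1 2) (.all 0 (.eq 1 2)))), ∅⟩

def ax_modalD : Scheme := ⟨∅, .imp (.all 0 (.not (.phi 0))) (.not (.all 0 (.phi 0))), ∅⟩

def ax_modal4 : Scheme := ⟨∅, .imp (.all 0 (.phi 0)) (.all 0 (.all 0 (.phi 0))), ∅⟩

/-- The system TMM. -/
def TMM : Set Scheme :=
  {ax_mp, ax_minimp, ax_peirce, ax_contrap, ax_notelim, ax_gen, ax_ALLdistr, ax_spec,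
   ax_modal5, ax_vacGen, ax_ALLcomm, ax_EQrefl, ax_EQsymm, ax_EQtrans, ax_denot,
   ax_subst, ax_ALLeq, ax_genEq}

/-- The subsystem T. -/
def Tsys : Set Scheme :=
  {ax_mp, ax_minimp, ax_peirce, ax_contrap, ax_notelim, ax_gen, ax_ALLdistr, ax_vacGen,
   ax_EQrefl, ax_EQsymm, ax_EQtrans, ax_denot}


/-- The composite of an object-substitution with a substitution. -/
def OSubst.compS (τ : OSubst) (σ : Subst) : OSubst :=
  ⟨fun i => τ.vr (σ.vr i), fun i => (σ.fm i).osubst τ⟩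

theorem MF.osubst_compS (τ : OSubst) (σ : Subst) (f : MF) :
    f.osubst (τ.compS σ) = (f.substMF σ).osubst τ := by
  induction f <;> simp_all [MF.osubst, MF.substMF, OSubst.compS]

theorem MF.vars_osubst (τ : OSubst) (f : MF) (v : ℕ) (hv : v ∈ (f.osubst τ).vars) :
    ∃ m ∈ f.OC, v ∈ τ.appVars m := by
  induction f with
  | phi i => exact ⟨MV.fm i, rfl, hv⟩
  | eq i j =>
    rcases hv with h | h
    · exact ⟨MV.vr i, Or.inl rfl, h⟩
    · exact ⟨MV.vr j, Or.inr rfl, h⟩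
  | imp a b iha ihb =>
    rcases hv with h | h
    · obtain ⟨m, hm, h'⟩ := iha h
      exact ⟨m, Or.inl hm, h'⟩
    · obtain ⟨m, hm, h'⟩ := ihb h
      exact ⟨m, Or.inr hm, h'⟩
  | not a ih => exact ih hv
  | all i a ih =>
    rcases hv with h | h
    · exact ⟨MV.vr i, Or.inl rfl, h⟩
    · obtain ⟨m, hm, h'⟩ := ih h
      exact ⟨m, Or.inr hm, h'⟩

theorem OSubst.appVars_compS (τ : OSubst) (σ : Subst) (m : MV) (v : ℕ)
    (hv : v ∈ (τ.compS σ).appVars m) : ∃ m' ∈ σ.appMV m, v ∈ τ.appVars m' := by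
  cases m with
  | vr i => exact ⟨MV.vr (σ.vr i), rfl, hv⟩
  | fm i => exact MF.vars_osubst τ _ v hv

theorem MF.osubst_congr (τ τ' : OSubst) (f : MF)
    (hv : ∀ i, MV.vr i ∈ f.OC → τ.vr i = τ'.vr i)
    (hf : ∀ i, MV.fm i ∈ f.OC → τ.fm i = τ'.fm i) : f.osubst τ = f.osubst τ' := by
  induction f with
  | phi i => exact hf i rfl
  | eq i j =>
    simp only [MF.osubst]
    rw [hv i (Or.inl rfl), hv j (Or.inr rfl)]
  | imp a b iha ihb =>
    simp only [MF.osubst]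
    rw [iha (fun i h => hv i (Or.inl h)) (fun i h => hf i (Or.inl h)),
      ihb (fun i h => hv i (Or.inr h)) (fun i h => hf i (Or.inr h))]
  | not a ih =>
    simp only [MF.osubst]
    rw [ih hv hf]
  | all i a ih =>
    simp only [MF.osubst]
    rw [hv i (Or.inl rfl), ih (fun i h => hv i (Or.inr h)) (fun i h => hf i (Or.inr h))]

theorem MF.OC_finite (f : MF) : f.OC.Finite := by
  induction f with
  | phi i => exact Set.finite_singleton _
  | eq i j => exact (Set.finite_singleton _).insert _
  | imp a b iha ihb => exact iha.union ihb
  | not a ih => exact ih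
  | all i a ih => exact ih.insert _

theorem FM.vars_finite (f : FM) : f.vars.Finite := by
  induction f with
  | eq i j => exact (Set.finite_singleton _).insert _
  | imp a b iha ihb => exact iha.union ihb
  | not a ih => exact ih
  | all i a ih => exact ih.insert _

theorem OSubst.appVars_finite (τ : OSubst) (m : MV) : (τ.appVars m).Finite := by
  cases m with
  | vr i => exact Set.finite_singleton _
  | fm i => exact FM.vars_finite _

theorem Scheme.OC_finite (Φ : Scheme) : Φ.OC.Finite := by
  refine Set.Finite.union ?_ (MF.OC_finite _)
  refine (Set.Finite.biUnion Φ.hyps.finite_toSet (fun h _ => MF.OC_finite h)).subset ?_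
  rintro m ⟨h, hh, hm⟩
  exact Set.mem_biUnion (Finset.mem_coe.2 hh) hm

/-- A code for metavariables. -/
def MV.code : MV → ℕ
  | .vr i => 2 * i
  | .fm i => 2 * i + 1

theorem MV.code_inj {m n : MV} (h : m.code = n.code) : m = n := by
  cases m <;> cases n <;> simp only [MV.code] at h <;> first | (congr 1; omega) | omega

open Classical in
/-- Modify `τ` outside `A`, sending the other metavariables to fresh variables. -/
noncomputable def OSubst.fresh (τ : OSubst) (A : Set MV) (N : ℕ) : OSubst :=
  ⟨fun i => if MV.vr i ∈ A then τ.vr i else N + (MV.vr i).code,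
   fun i => if MV.fm i ∈ A then τ.fm i else .eq (N + (MV.fm i).code) (N + (MV.fm i).code)⟩

theorem OSubst.fresh_in (τ : OSubst) (A : Set MV) (N : ℕ) (m : MV) (hm : m ∈ A) :
    (τ.fresh A N).appVars m = τ.appVars m := by
  cases m <;> simp [OSubst.appVars, OSubst.fresh, hm]

theorem OSubst.fresh_out (τ : OSubst) (A : Set MV) (N : ℕ) (m : MV) (hm : m ∉ A) :
    (τ.fresh A N).appVars m = {N + m.code} := by
  cases m <;> simp [OSubst.appVars, OSubst.fresh, hm, FM.vars]

/-- Soundness: if a scheme is provable from a set of true schemes, then it is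
true. -/
theorem soundness (S : Set Scheme) (hS : ∀ Ψ ∈ S, Ψ.IsTrue) (Φ : Scheme)
    (h : Provable S Φ) : Φ.IsTrue := by
  obtain ⟨P, hne, hlast, hP⟩ := h
  intro τ hτ D hD hyp
  have hfin : (⋃ m ∈ Φ.OC, τ.appVars m).Finite :=
    Set.Finite.biUnion Φ.OC_finite (fun m _ => τ.appVars_finite m)
  obtain ⟨M, hM⟩ := hfin.bddAbove
  have hlt : ∀ m ∈ Φ.OC, ∀ v ∈ τ.appVars m, v < M + 1 := fun m hm v hv =>
    Nat.lt_succ_of_le (hM (Set.mem_biUnion hm hv))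
  let τ' := τ.fresh Φ.OC (M + 1)
  have hcongr : ∀ f : MF, f.OC ⊆ Φ.OC → f.osubst τ' = f.osubst τ := by
    intro f hf
    apply MF.osubst_congr
    · intro i hi
      simp [τ', OSubst.fresh, hf hi]
    · intro i hi
      simp [τ', OSubst.fresh, hf hi]
  -- distinct metavariables in a DV condition of the proof get disjoint images
  have hdisj : ∀ m n : MV, m ≠ n → s(m, n) ∈ proofDV Φ P → ∀ v,
      v ∈ τ'.appVars m → v ∈ τ'.appVars n → False := by
    intro m n hmn hdv v hvm hvn
    by_cases hm : m ∈ Φ.OC <;> by_cases hn : n ∈ Φ.OC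
    · rw [OSubst.fresh_in _ _ _ _ hm] at hvm
      rw [OSubst.fresh_in _ _ _ _ hn] at hvn
      rcases hdv with hdv | ⟨a, b, _, ha, _, hab⟩
      · have := hτ m n hdv
        exact (Set.mem_empty_iff_false v).1 (this ▸ ⟨hvm, hvn⟩)
      · rcases Sym2.eq_iff.1 hab with ⟨h1, _⟩ | ⟨_, h1⟩
        · exact ha (h1 ▸ hm)
        · exact ha (h1 ▸ hn)
    · rw [OSubst.fresh_in _ _ _ _ hm] at hvm
      rw [OSubst.fresh_out _ _ _ _ hn] at hvn
      have := hlt m hm v hvm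
      have h2 : v = M + 1 + n.code := hvn
      omega
    · rw [OSubst.fresh_out _ _ _ _ hm] at hvm
      rw [OSubst.fresh_in _ _ _ _ hn] at hvn
      have := hlt n hn v hvn
      have h2 : v = M + 1 + m.code := hvm
      omega
    · rw [OSubst.fresh_out _ _ _ _ hm] at hvm
      rw [OSubst.fresh_out _ _ _ _ hn] at hvn
      have h1 : v = M + 1 + m.code := hvm
      have h2 : v = M + 1 + n.code := hvn
      exact hmn (MV.code_inj (by omega))
  have key : ∀ (k : ℕ) (hk : k < P.length), FM.Valid D ((P.get ⟨k, hk⟩).osubst τ') := by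
    intro k
    induction k using Nat.strong_induction_on with
    | _ k ih =>
      intro hk
      rcases hP k hk with hh | ⟨hs, hhs, Ξ, hΞ, σ, hσ, h1, h2, h3⟩
      · rw [hcongr _ (fun m hm => Or.inl ⟨_, hh, hm⟩)]
        exact hyp _ hh
      · have h2' : P.get ⟨k, hk⟩ = Ξ.concl.substMF σ := h2
        have h1' : hs = Ξ.hyps.image (MF.substMF σ) := h1
        rw [h2', ← MF.osubst_compS]
        refine hS Ξ hΞ (τ'.compS σ) ?_ D hD ?_
        · intro m n hmn
          rw [Set.eq_empty_iff_forall_notMem]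
          rintro v ⟨hvm, hvn⟩
          obtain ⟨m', hm', hvm'⟩ := OSubst.appVars_compS τ' σ m v hvm
          obtain ⟨n', hn', hvn'⟩ := OSubst.appVars_compS τ' σ n v hvn
          refine hdisj m' n' ?_ (h3 ⟨m, n, m', n', hmn, hm', hn', rfl⟩) v hvm' hvn'
          rintro rfl
          have := hσ m n hmn
          exact (Set.mem_empty_iff_false m').1 (this ▸ ⟨hm', hn'⟩)
        · intro g hg
          rw [MF.osubst_compS]
          obtain ⟨l, hl, hgl⟩ := hhs (g.substMF σ) (h1' ▸ Finset.mem_image_of_mem _ hg)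
          rw [← hgl]
          exact ih l hl _
  rw [← hcongr _ (fun m hm => Or.inr hm)]
  have hmem : Φ.concl ∈ P := List.mem_of_getLast? hlast
  obtain ⟨k, hk⟩ := List.mem_iff_get.1 hmem
  rw [← hk]
  exact key k.1 k.2
end

section
/- For every metaformula Φ and every variable metavariable x, the hypothesis-free scheme with conclusion ∀x Φ → Φ and DV conditions consisting exactly of the pairs {x, m} for every metavariable m occurring in Φ other than x, is provable from the subsystem T. -/
set_option autoImplicit false

/-! ## Helper calculus -/

/-- Derivability with a fixed relation of disjointness on metavariables. -/
inductive Der (R : MV → MV → Prop) : MF → Prop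
  | minimp {a b c d e : MF} : Der R (.imp a (.imp (.imp b c)
      (.imp (.imp (.imp d b) (.imp c e)) (.imp b e))))
  | peirce {a b : MF} : Der R (.imp (.imp (.imp a b) a) a)
  | contrap {a b : MF} : Der R (.imp (.imp a (.not b)) (.imp b (.not a)))
  | notelim {a b : MF} : Der R (.imp (.not a) (.imp a b))
  | distr {k : ℕ} {a b : MF} : Der R (.imp (.all k (.imp a b)) (.imp (.all k a) (.all k b)))
  | vac {k : ℕ} {a : MF} (h : ∀ m ∈ a.OC, R (.vr k) m) : Der R (.imp a (.all k a))
  | eqrefl {i : ℕ} : Der R (.eq i i)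
  | eqsymm {i j : ℕ} : Der R (.imp (.eq i j) (.eq j i))
  | eqtrans {i j k : ℕ} : Der R (.imp (.eq i j) (.imp (.eq j k) (.eq i k)))
  | denot {i j : ℕ} (h : R (.vr i) (.vr j)) :
      Der R (.imp (.eq i i) (.not (.all j (.not (.eq j i)))))
  | mp {a b : MF} : Der R (.imp a b) → Der R a → Der R b
  | gen {k : ℕ} {a : MF} : Der R a → Der R (.all k a)

namespace Der

variable {R : MV → MV → Prop}

theorem N {b c d e : MF} :
    Der R (.imp (.imp b c) (.imp (.imp (.imp d b) (.imp c e)) (.imp b e))) :=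
  mp minimp (minimp (a := b) (b := b) (c := b) (d := b) (e := b))

theorem ss {a b c : MF} : Der R (.imp (.imp (.imp a b) c) (.imp b c)) := by
  refine' mp (mp (mp (mp minimp minimp) minimp) (mp minimp minimp)) (mp (mp (mp (mp minimp minimp) minimp) (mp minimp minimp)) (mp (mp (mp minimp minimp) minimp) (mp (mp minimp minimp) minimp)))
  all_goals exact .eq 0 0

theorem syl {a b c : MF} : Der R (.imp (.imp a b) (.imp (.imp b c) (.imp a c))) := by
  refine' mp (mp (mp minimp minimp) (mp minimp minimp)) (mp (mp (mp (mp minimp minimp) minimp) (mp (mp (mp (mp minimp minimp) minimp) (mp minimp minimp)) (mp (mp (mp (mp minimp minimp) minimp) (mp minimp minimp)) (mp (mp (mp minimp minimp) minimp) (mp minimp minimp))))) (mp (mp (mp (mp minimp minimp) minimp) (mp minimp minimp)) (mp (mp (mp (mp minimp minimp) minimp) (mp minimp minimp)) (mp (mp (mp minimp minimp) minimp) (mp (mp minimp minimp) minimp)))))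
  all_goals exact .eq 0 0

theorem K {a b : MF} : Der R (.imp a (.imp b a)) := by
  refine' mp (mp (mp minimp minimp) minimp) (mp (mp (mp (mp minimp minimp) minimp) (mp minimp minimp)) (mp (mp (mp (mp minimp minimp) minimp) (mp minimp minimp)) (mp (mp (mp minimp minimp) minimp) (mp minimp minimp))))
  all_goals exact .eq 0 0

theorem com {a b c : MF} : Der R (.imp (.imp a (.imp b c)) (.imp b (.imp a c))) := by
  refine' mp (mp (mp Der.syl Der.syl) (mp Der.syl Der.syl)) (mp (mp (mp (mp Der.syl Der.ss) Der.syl) Der.N) (mp Der.N Der.K))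
  all_goals exact .eq 0 0

theorem C {a b c : MF} : Der R (.imp (.imp a b) (.imp (.imp a (.imp b c)) (.imp a c))) := by
  refine' mp (mp Der.syl Der.N) (mp Der.syl (mp Der.syl (mp (mp Der.N Der.K) (mp Der.N (mp (mp Der.syl (mp Der.ss Der.syl)) (mp Der.N Der.K))))))
  all_goals exact .eq 0 0

theorem S {a b c : MF} : Der R (.imp (.imp a (.imp b c)) (.imp (.imp a b) (.imp a c))) :=
  mp com C

end Der

/-- Entailment from a list of assumptions (propositional consequence only). -/
inductive Ent (R : MV → MV → Prop) (Γ : List MF) : MF → Prop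
  | hyp {a : MF} : a ∈ Γ → Ent R Γ a
  | thm {a : MF} : Der R a → Ent R Γ a
  | mp {a b : MF} : Ent R Γ (.imp a b) → Ent R Γ a → Ent R Γ b

namespace Ent

variable {R : MV → MV → Prop}

theorem ded {Γ : List MF} {a b : MF} (h : Ent R (a :: Γ) b) : Ent R Γ (.imp a b) := by
  induction h with
  | @hyp c hc =>
    rcases List.mem_cons.1 hc with rfl | hc
    · exact .thm (.mp (.mp Der.S Der.K) (Der.K (b := c)))
    · exact .mp (.thm Der.K) (.hyp hc)
  | thm h => exact .thm (.mp Der.K h)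
  | mp _ _ ih1 ih2 => exact .mp (.mp (.thm Der.S) ih1) ih2

theorem der {a : MF} (h : Ent R [] a) : Der R a := by
  induction h with
  | hyp h => simp at h
  | thm h => exact h
  | mp _ _ ih1 ih2 => exact .mp ih1 ih2

theorem notI {Γ : List MF} {a b : MF} (h1 : Ent R (a :: Γ) b) (h2 : Ent R (a :: Γ) (.not b)) :
    Ent R Γ (.not a) := by
  -- `a → ¬T` for the theorem `T = (x₀ ≡ x₀)`
  have h3 : Ent R (a :: Γ) (.not (.eq 0 0)) := .mp (.mp (.thm .notelim) h2) h1
  exact .mp (.mp (.thm .contrap) h3.ded) (.thm .eqrefl)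

theorem byContra {Γ : List MF} {a b : MF} (h1 : Ent R (.not a :: Γ) b)
    (h2 : Ent R (.not a :: Γ) (.not b)) : Ent R Γ a := by
  have h3 : Ent R (.not a :: Γ) a := .mp (.mp (.thm .notelim) h2) h1
  refine .mp (.thm (.peirce (b := .not (.eq 0 0)))) (ded ?_)
  have h4 : Ent R (.imp a (.not (.eq 0 0)) :: Γ) (.not a) :=
    .mp (.mp (.thm (.contrap (b := .eq 0 0))) (.hyp (by simp))) (.thm .eqrefl)
  refine .mp ?_ h4
  -- weaken `h3.ded`
  have h5 := h3.ded
  clear h3 h1 h2 h4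
  generalize MF.imp (.not a) a = c at h5
  induction h5 with
  | hyp h => exact .hyp (by simp [h])
  | thm h => exact .thm h
  | mp _ _ ih1 ih2 => exact .mp ih1 ih2

end Ent

namespace Der

variable {R : MV → MV → Prop}

theorem trans {a b c : MF} (h1 : Der R (.imp a b)) (h2 : Der R (.imp b c)) : Der R (.imp a c) :=
  mp (mp syl h1) h2

theorem allMono {k : ℕ} {a b : MF} (h : Der R (.imp a b)) : Der R (.imp (.all k a) (.all k b)) :=
  mp distr (gen h)

/-- Specialization with an implicit substitution. -/
theorem spim {x y : ℕ} {a b : MF} (h : Der R (.imp (.eq x y) (.imp a b)))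
    (hb : ∀ m ∈ b.OC, R (.vr x) m) (hxy : R (.vr y) (.vr x)) : Der R (.imp (.all x a) b) := by
  have h1 : Der R (.imp a (.imp (.not b) (.not (.eq x y)))) := by
    refine (Ent.ded (Ent.ded (Ent.notI (b := b) ?_ ?_))).der
    · exact .mp (.mp (.thm h) (.hyp (by simp))) (.hyp (by simp))
    · exact .hyp (by simp)
  have h2 : Der R (.imp (.all x a) (.imp (.all x (.not b)) (.all x (.not (.eq x y))))) :=
    trans (allMono h1) distr
  have h3 : Der R (.imp (.not b) (.all x (.not b))) := vac hb
  refine (Ent.ded (Ent.byContra (b := .all x (.not (.eq x y))) ?_ ?_)).der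
  · exact .mp (.mp (.thm h2) (.hyp (by simp))) (.mp (.thm h3) (.hyp (by simp)))
  · exact .thm (mp (denot hxy) eqrefl)

/-- One direction of the change of bound variable. -/
theorem cbv {x y : ℕ} {a b : MF} (h : Der R (.imp (.eq x y) (.imp a b)))
    (hb : ∀ m ∈ b.OC, R (.vr x) m) (hyx : R (.vr y) (.vr x)) (ha : ∀ m ∈ a.OC, R (.vr y) m) :
    Der R (.imp (.all x a) (.all y b)) := by
  refine trans (vac ?_) (allMono (spim h hb hyx))
  intro m hm
  rcases hm with rfl | hm
  · exact hyx
  · exact ha m hm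

end Der

/-- Replace every occurrence of the variable `x` by `y`. -/
def MF.ren (x y : ℕ) : MF → MF
  | .phi i => .phi i
  | .eq i j => .eq (if i = x then y else i) (if j = x then y else j)
  | .imp a b => .imp (a.ren x y) (b.ren x y)
  | .not a => .not (a.ren x y)
  | .all i a => .all (if i = x then y else i) (a.ren x y)

theorem MF.ren_OC (x y : ℕ) (A : MF) {m : MV} (h : m ∈ (A.ren x y).OC) :
    m = .vr y ∨ (m ∈ A.OC ∧ m ≠ .vr x) := by
  induction A with
  | phi i => simp only [MF.ren, MF.OC, Set.mem_singleton_iff] at h ⊢; subst h; simp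
  | eq i j =>
    simp only [MF.ren, MF.OC, Set.mem_insert_iff, Set.mem_singleton_iff] at h ⊢
    rcases h with h | h <;> split_ifs at h with hi <;> subst h <;> simp [hi]
  | imp a b iha ihb =>
    rcases h with h | h
    · rcases iha h with h | h
      · exact .inl h
      · exact .inr ⟨.inl h.1, h.2⟩
    · rcases ihb h with h | h
      · exact .inl h
      · exact .inr ⟨.inr h.1, h.2⟩
  | not a ih => exact ih h
  | all i a ih =>
    rcases h with h | h
    · split_ifs at h with hi <;> subst h <;> simp [hi, MF.OC]
    · rcases ih h with h | h
      · exact .inl h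
      · exact .inr ⟨.inr h.1, h.2⟩

theorem ren_equiv {R : MV → MV → Prop} (x y : ℕ) (hxy : R (.vr x) (.vr y))
    (hsymm : ∀ m n, R m n → R n m) (A : MF) (hx : ∀ m ∈ A.OC, m ≠ .vr x → R (.vr x) m)
    (hy : ∀ m ∈ A.OC, R (.vr y) m) :
    Der R (.imp (.eq x y) (.imp A (A.ren x y))) ∧
    Der R (.imp (.eq x y) (.imp (A.ren x y) A)) := by
  induction A with
  | phi i =>
    constructor <;> exact (Ent.ded (Ent.ded (.hyp (by simp [MF.ren])))).der
  | eq i j =>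
    have loc : ∀ (B : MF) (i : ℕ), Ent R [B, .eq x y] (.eq i (if i = x then y else i)) := by
      intro B i
      split_ifs with hi
      · subst hi; exact .hyp (by simp)
      · exact .thm .eqrefl
    have sy : ∀ {Γ : List MF} {i j : ℕ}, Ent R Γ (.eq i j) → Ent R Γ (.eq j i) :=
      fun h => .mp (.thm .eqsymm) h
    have tr : ∀ {Γ : List MF} {i j k : ℕ}, Ent R Γ (.eq i j) → Ent R Γ (.eq j k) →
        Ent R Γ (.eq i k) := fun h hjk => .mp (.mp (.thm .eqtrans) h) hjk
    constructor
    · refine (Ent.ded (Ent.ded ?_)).der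
      exact tr (sy (loc _ i)) (tr (.hyp (by simp)) (loc _ j))
    · refine (Ent.ded (Ent.ded ?_)).der
      exact tr (loc _ i) (tr (.hyp (by simp [MF.ren])) (sy (loc _ j)))
  | imp a b iha ihb =>
    obtain ⟨a1, a2⟩ := iha (fun m h => hx m (.inl h)) (fun m h => hy m (.inl h))
    obtain ⟨b1, b2⟩ := ihb (fun m h => hx m (.inr h)) (fun m h => hy m (.inr h))
    constructor
    · refine (Ent.ded (Ent.ded (Ent.ded ?_))).der
      exact .mp (.mp (.thm b1) (.hyp (by simp))) (.mp (a := a) (.hyp (by simp))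
        (.mp (.mp (.thm a2) (.hyp (by simp))) (.hyp (by simp))))
    · refine (Ent.ded (Ent.ded (Ent.ded ?_))).der
      exact .mp (.mp (.thm b2) (.hyp (by simp))) (.mp (a := a.ren x y) (.hyp (by simp [MF.ren]))
        (.mp (.mp (.thm a1) (.hyp (by simp))) (.hyp (by simp))))
  | not a ih =>
    obtain ⟨a1, a2⟩ := ih hx hy
    constructor
    · refine (Ent.ded (Ent.ded (Ent.notI (b := a) ?_ (.hyp (by simp))))).der
      exact .mp (.mp (.thm a2) (.hyp (by simp))) (.hyp (by simp))
    · refine (Ent.ded (Ent.ded (Ent.notI (b := a.ren x y) ?_ (.hyp (by simp [MF.ren]))))).der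
      exact .mp (.mp (.thm a1) (.hyp (by simp))) (.hyp (by simp))
  | all i a ih =>
    obtain ⟨a1, a2⟩ := ih (fun m h => hx m (.inr h)) (fun m h => hy m (.inr h))
    by_cases hi : i = x
    · subst hi
      have haren : ∀ m ∈ (a.ren i y).OC, R (.vr i) m := by
        intro m hm
        rcases MF.ren_OC _ _ _ hm with rfl | hm
        · exact hxy
        · exact hx m (.inr hm.1) hm.2
      have c1 : Der R (.imp (.all i a) (.all y (a.ren i y))) :=
        Der.cbv a1 haren (hsymm _ _ hxy) (fun m h => hy m (.inr h))
      have c2 : Der R (.imp (.all y (a.ren i y)) (.all i a)) :=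
        Der.cbv (Der.trans .eqsymm a2) (fun m h => hy m (.inr h)) hxy haren
      simp only [MF.ren, if_true]
      exact ⟨.mp Der.K c1, .mp Der.K c2⟩
    · have e : Der R (.imp (.eq x y) (.all i (.eq x y))) := by
        refine .vac ?_
        intro m hm
        rcases hm with rfl | hm
        · exact hsymm _ _ (hx _ (.inl rfl) (by simpa using hi))
        · rw [Set.mem_singleton_iff.1 hm]
          exact hsymm _ _ (hy _ (.inl rfl))
      simp only [MF.ren, hi, if_false]
      exact ⟨Der.trans e (Der.trans (Der.allMono a1) .distr),
        Der.trans e (Der.trans (Der.allMono a2) .distr)⟩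

theorem spec_der {R : MV → MV → Prop} (x y : ℕ) (hxy : R (.vr x) (.vr y))
    (hsymm : ∀ m n, R m n → R n m) (A : MF) (hx : ∀ m ∈ A.OC, m ≠ .vr x → R (.vr x) m)
    (hy : ∀ m ∈ A.OC, R (.vr y) m) : Der R (.imp (.all x A) A) := by
  obtain ⟨a1, a2⟩ := ren_equiv x y hxy hsymm A hx hy
  refine Der.trans (Der.cbv a1 ?_ (hsymm _ _ hxy) hy) (Der.spim (Der.trans .eqsymm a2) hy hxy)
  intro m hm
  rcases MF.ren_OC _ _ _ hm with rfl | hm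
  · exact hxy
  · exact hx m hm.1 hm.2

/-! ## From derivations to proofs as sequences -/

/-- A substitution specified on the metavariables used by the axioms. -/
def mkS (v0 v1 v2 : ℕ) (f0 f1 f2 f3 f4 : MF) : Subst where
  vr := fun i => match i with
    | 0 => v0 | 1 => v1 | 2 => v2 | n + 3 => n + 3
  fm := fun i => match i with
    | 0 => f0 | 1 => f1 | 2 => f2 | 3 => f3 | 4 => f4 | n + 5 => .phi (n + 5)
  finVr := by
    refine (Set.finite_lt_nat 3).subset ?_
    intro i hi
    match i, hi with
    | 0, _ => simp
    | 1, _ => simp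
    | 2, _ => simp
    | n + 3, h => exact absurd rfl h
  finFm := by
    refine (Set.finite_lt_nat 5).subset ?_
    intro i hi
    match i, hi with
    | 0, _ => simp
    | 1, _ => simp
    | 2, _ => simp
    | 3, _ => simp
    | 4, _ => simp
    | n + 5, h => exact absurd rfl h

/-- `f` is an instance of an axiom without hypotheses, for all DV sets that
contain the pairs related by `R` among the metavariables of `f`. -/
def AxOK (R : MV → MV → Prop) (f : MF) : Prop :=
  ∀ dv : Set (Sym2 MV), (∀ m ∈ f.OC, ∀ n ∈ f.OC, R m n → s(m, n) ∈ dv) →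
    ∃ Ξ ∈ Tsys, Ξ.Inst ⟨∅, f, dv⟩

/-- Justification of a formula from a list of previous ones. -/
def Just (R : MV → MV → Prop) (P : List MF) (f : MF) : Prop :=
  AxOK R f ∨ (∃ a ∈ P, MF.imp a f ∈ P) ∨ ∃ k, ∃ a ∈ P, f = .all k a

theorem Just.mono {R : MV → MV → Prop} {P Q : List MF} {f : MF} (h : Just R P f)
    (hPQ : ∀ a ∈ P, a ∈ Q) : Just R Q f := by
  rcases h with h | ⟨a, h1, h2⟩ | ⟨k, a, h, e⟩
  · exact .inl h
  · exact .inr (.inl ⟨a, hPQ _ h1, hPQ _ h2⟩)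
  · exact .inr (.inr ⟨k, a, hPQ _ h, e⟩)

/-- Well-justified sequences. -/
inductive Good (R : MV → MV → Prop) : List MF → Prop
  | nil : Good R []
  | snoc {P : List MF} {f : MF} : Good R P → Just R P f → Good R (P ++ [f])

theorem Good.append {R : MV → MV → Prop} {P Q : List MF} (hP : Good R P) (hQ : Good R Q) :
    Good R (P ++ Q) := by
  induction hQ with
  | nil => simpa using hP
  | snoc _ hj ih =>
    rw [← List.append_assoc]
    exact .snoc ih (hj.mono (by simp +contextual))

theorem Good.get {R : MV → MV → Prop} {P : List MF} (hP : Good R P) (k : ℕ) (hk : k < P.length) :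
    Just R (P.take k) P[k] := by
  induction hP with
  | nil => simp at hk
  | @snoc P f _ hj ih =>
    by_cases h : k < P.length
    · rw [List.getElem_append_left h, List.take_append_of_le_length h.le]
      exact ih h
    · have : k = P.length := by simp at hk; omega
      subst this
      simpa using hj

theorem mk_inst {R : MV → MV → Prop} {f : MF} (Ξ : Scheme) (hΞ : Ξ ∈ Tsys) (σ : Subst)
    (hh : Ξ.hyps = ∅) (hc : f = Ξ.concl.substMF σ) (hd : Ξ.dv = ∅) : AxOK R f := by
  intro dv _
  refine ⟨Ξ, hΞ, σ, ?_, ?_, hc, ?_⟩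
  · intro m n h; simp [hd] at h
  · simp [hh]
  · rintro q ⟨mm, nn, m, n, h, -⟩; simp [hd] at h

theorem mk_inst_dv {R : MV → MV → Prop} {f : MF} (Ξ : Scheme) (hΞ : Ξ ∈ Tsys) (σ : Subst)
    (hirr : ∀ m, ¬ R m m) (hh : Ξ.hyps = ∅) (hc : f = Ξ.concl.substMF σ) (u v : MV)
    (hd : Ξ.dv = {s(u, v)})
    (hu : σ.appMV u ⊆ f.OC) (hv : σ.appMV v ⊆ f.OC)
    (hR : ∀ m ∈ σ.appMV u, ∀ n ∈ σ.appMV v, R m n) : AxOK R f := by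
  intro dv hdv
  refine ⟨Ξ, hΞ, σ, ?_, ?_, hc, ?_⟩
  · intro m n h
    rw [hd, Set.mem_singleton_iff, Sym2.eq_iff] at h
    refine Set.eq_empty_iff_forall_notMem.2 ?_
    rcases h with ⟨rfl, rfl⟩ | ⟨rfl, rfl⟩
    · rintro a ⟨h1, h2⟩; exact hirr a (hR a h1 a h2)
    · rintro a ⟨h1, h2⟩; exact hirr a (hR a h2 a h1)
  · simp [hh]
  · rintro q ⟨mm, nn, m, n, h, hm, hn, rfl⟩
    rw [hd, Set.mem_singleton_iff, Sym2.eq_iff] at h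
    rcases h with ⟨rfl, rfl⟩ | ⟨rfl, rfl⟩
    · exact hdv _ (hu hm) _ (hv hn) (hR _ hm _ hn)
    · rw [Sym2.eq_swap]; exact hdv _ (hu hn) _ (hv hm) (hR _ hn _ hm)

theorem Der.toGood {R : MV → MV → Prop} (hirr : ∀ m, ¬ R m m) {f : MF} (h : Der R f) :
    ∃ P, Good R (P ++ [f]) := by
  have ax : ∀ {f : MF}, AxOK R f → ∃ P, Good R (P ++ [f]) :=
    fun h => ⟨[], .snoc .nil (.inl h)⟩
  induction h with
  | @minimp a b c d e =>
    exact ax (mk_inst ax_minimp (by simp [Tsys]) (mkS 0 0 0 a b c d e) rfl rfl rfl)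
  | @peirce a b =>
    exact ax (mk_inst ax_peirce (by simp [Tsys]) (mkS 0 0 0 a b b b b) rfl rfl rfl)
  | @contrap a b =>
    exact ax (mk_inst ax_contrap (by simp [Tsys]) (mkS 0 0 0 a b b b b) rfl rfl rfl)
  | @notelim a b =>
    exact ax (mk_inst ax_notelim (by simp [Tsys]) (mkS 0 0 0 a b b b b) rfl rfl rfl)
  | @distr k a b =>
    exact ax (mk_inst ax_ALLdistr (by simp [Tsys]) (mkS k k k a b b b b) rfl rfl rfl)
  | @eqrefl i =>
    exact ax (mk_inst ax_EQrefl (by simp [Tsys])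
      (mkS i i i (.phi 0) (.phi 0) (.phi 0) (.phi 0) (.phi 0)) rfl rfl rfl)
  | @eqsymm i j =>
    exact ax (mk_inst ax_EQsymm (by simp [Tsys])
      (mkS i j j (.phi 0) (.phi 0) (.phi 0) (.phi 0) (.phi 0)) rfl rfl rfl)
  | @eqtrans i j k =>
    exact ax (mk_inst ax_EQtrans (by simp [Tsys])
      (mkS i j k (.phi 0) (.phi 0) (.phi 0) (.phi 0) (.phi 0)) rfl rfl rfl)
  | @vac k a h =>
    refine ax (mk_inst_dv ax_vacGen (by simp [Tsys]) (mkS k k k a a a a a) hirr rfl rfl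
      (.vr 0) (.fm 0) rfl ?_ ?_ ?_)
    · rintro m rfl; exact .inr (.inl rfl)
    · intro m hm; exact .inl hm
    · rintro m rfl n hn; exact h n hn
  | @denot i j h =>
    refine ax (mk_inst_dv ax_denot (by simp [Tsys])
      (mkS i j j (.phi 0) (.phi 0) (.phi 0) (.phi 0) (.phi 0)) hirr rfl rfl
      (.vr 0) (.vr 1) rfl ?_ ?_ ?_)
    · rintro m rfl; exact .inl (.inl rfl)
    · rintro m rfl; exact .inr (.inl rfl)
    · rintro m rfl n rfl; exact h
  | @mp a b _ _ ih1 ih2 =>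
    obtain ⟨P, hP⟩ := ih1
    obtain ⟨Q, hQ⟩ := ih2
    exact ⟨_, .snoc (hP.append hQ) (.inr (.inl ⟨a, by simp, by simp⟩))⟩
  | @gen k a _ ih =>
    obtain ⟨P, hP⟩ := ih
    exact ⟨_, .snoc hP (.inr (.inr ⟨k, a, by simp, rfl⟩))⟩

/-- The disjointness relation attached to a scheme. -/
def schemeR (Φ : Scheme) (m n : MV) : Prop :=
  m ≠ n ∧ (s(m, n) ∈ Φ.dv ∨ m ∉ Φ.OC ∨ n ∉ Φ.OC)

theorem provable_of_der (Φ : Scheme) (h : Der (schemeR Φ) Φ.concl) : Provable Tsys Φ := by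
  obtain ⟨P, hP⟩ := h.toGood (fun m hm => hm.1 rfl)
  refine ⟨P ++ [Φ.concl], by simp, by simp, ?_⟩
  generalize P ++ [Φ.concl] = Q at hP
  intro k hk
  right
  have hmem : ∀ a ∈ Q.take k, ∃ (l : ℕ) (hl : l < k), Q.get ⟨l, hl.trans hk⟩ = a := by
    intro a ha
    obtain ⟨l, hl, e⟩ := List.mem_iff_getElem.1 ha
    simp only [List.length_take, lt_min_iff] at hl
    refine ⟨l, hl.1, ?_⟩
    simpa using e
  have hj := hP.get k hk
  rw [← List.get_eq_getElem (i := ⟨k, hk⟩)] at hj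
  have hf : Q.get ⟨k, hk⟩ ∈ Q := List.get_mem _ _
  generalize Q.get ⟨k, hk⟩ = f at hj hf
  rcases hj with hax | ⟨a, h1, h2⟩ | ⟨i, a, h1, rfl⟩
  · refine ⟨∅, by simp, hax _ ?_⟩
    rintro m hm n hn ⟨-, hR⟩
    rcases hR with hR | hR | hR
    · exact .inl hR
    · exact .inr ⟨m, n, ⟨f, hf, hm⟩, hR, ⟨f, hf, hn⟩, rfl⟩
    · exact .inr ⟨n, m, ⟨f, hf, hn⟩, hR, ⟨f, hf, hm⟩, Sym2.eq_swap⟩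
  · refine ⟨{a, .imp a f}, ?_, ax_mp, by simp [Tsys], mkS 0 0 0 a f f f f, ?_, ?_, rfl, ?_⟩
    · intro b hb
      rcases Finset.mem_insert.1 hb with rfl | hb
      · exact hmem _ h1
      · rw [Finset.mem_singleton.1 hb]; exact hmem _ h2
    · intro m n h; simp [ax_mp] at h
    · simp [ax_mp, MF.substMF, mkS]
    · rintro q ⟨mm, nn, m, n, h, -⟩; simp [ax_mp] at h
  · refine ⟨{a}, ?_, ax_gen, by simp [Tsys], mkS i i i a a a a a, ?_, ?_, rfl, ?_⟩
    · intro b hb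
      rw [Finset.mem_singleton.1 hb]; exact hmem _ h1
    · intro m n h; simp [ax_gen] at h
    · simp [ax_gen, MF.substMF, mkS]
    · rintro q ⟨mm, nn, m, n, h, -⟩; simp [ax_gen] at h

theorem MF.OC_finite_s3 (A : MF) : A.OC.Finite := by
  induction A with
  | phi i => exact Set.finite_singleton _
  | eq i j => exact (Set.finite_singleton _).insert _
  | imp a b iha ihb => exact iha.union ihb
  | not a ih => exact ih
  | all i a ih => exact ih.insert _

/-- For every metaformula Φ and variable metavariable x, the scheme
∀x Φ → Φ with DV conditions exactly the pairs {x, m} for m occurring in Φ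
other than x, is provable from the subsystem T. -/
theorem spec_object_provable (Φ : MF) (x : ℕ) :
    Provable Tsys
      ⟨∅, .imp (.all x Φ) Φ,
        {q | ∃ m ∈ Φ.OC, m ≠ MV.vr x ∧ q = s(MV.vr x, m)}⟩ := by

  obtain ⟨y, hy⟩ : ∃ y : ℕ, MV.vr y ∉ (MF.imp (.all x Φ) Φ).OC := by
    have hfin := (MF.OC_finite_s3 (MF.imp (.all x Φ) Φ)).preimage
      (f := MV.vr) (fun a _ b _ h => by simpa using h)
    exact hfin.exists_notMem
  have hOC : ∀ m ∈ Φ.OC, m ∈ (MF.imp (.all x Φ) Φ).OC := fun m h => .inr h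
  have hxO : MV.vr x ∈ (MF.imp (.all x Φ) Φ).OC := .inl (.inl rfl)
  have hsO : ∀ m, m ∉ (MF.imp (.all x Φ) Φ).OC → m ∉ Scheme.OC ⟨∅, .imp (.all x Φ) Φ,
        {q | ∃ m ∈ Φ.OC, m ≠ MV.vr x ∧ q = s(MV.vr x, m)}⟩ := by
    rintro m hm (⟨h, hh, -⟩ | h)
    · simp at hh
    · exact hm h
  refine provable_of_der _ (spec_der x y ?_ ?_ Φ ?_ ?_)
  · exact ⟨fun h => hy (h ▸ hxO), .inr (.inr (hsO _ hy))⟩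
  · rintro m n ⟨h1, h2⟩
    refine ⟨h1.symm, ?_⟩
    rcases h2 with h2 | h2 | h2
    · rw [Sym2.eq_swap] at h2; exact .inl h2
    · exact .inr (.inr h2)
    · exact .inr (.inl h2)
  · intro m hm hne
    exact ⟨hne.symm, .inl ⟨m, hm, hne, rfl⟩⟩
  · intro m hm
    exact ⟨fun h => hy (h ▸ hOC m hm), .inr (.inl (hsO _ hy))⟩
end

section
/- For every metaformula Φ and all variable metavariables x and y, the hypothesis-free scheme with conclusion ∀x∀y Φ → ∀y∀x Φ and DV conditions consisting exactly of the pairs {y, m} for every m in ({x} ∪ OC(Φ)) ∖ {y}, is provable from the subsystem T. -/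
set_option autoImplicit false

namespace MegAux

/-- Derivability from the system T with a fixed set of DV conditions. -/
inductive Der (D : Set (Sym2 MV)) : MF → Prop
  | ax (F : MF) (Ξ : Scheme) : Ξ ∈ Tsys → Ξ.Inst ⟨∅, F, D⟩ → Der D F
  | mp (a b : MF) : Der D (.imp a b) → Der D a → Der D b
  | gen (v : ℕ) (a : MF) : Der D a → Der D (.all v a)

/-- A finite-support substitution for the metavariables used in the axioms. -/
def sb (a b c : ℕ) (p q r s t : MF) : Subst where
  vr i := if i = 0 then a else if i = 1 then b else if i = 2 then c else i
  fm i := if i = 0 then p else if i = 1 then q else if i = 2 then r else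
    if i = 3 then s else if i = 4 then t else .phi i
  finVr := by
    refine (Set.finite_Iic 2).subset ?_
    intro i hi
    by_contra h
    simp only [Set.mem_Iic] at h
    apply hi
    rw [if_neg (by omega), if_neg (by omega), if_neg (by omega)]
  finFm := by
    refine (Set.finite_Iic 4).subset ?_
    intro i hi
    by_contra h
    simp only [Set.mem_Iic] at h
    apply hi
    rw [if_neg (by omega), if_neg (by omega), if_neg (by omega), if_neg (by omega),
      if_neg (by omega)]

theorem inst_nodv (Ξ : Scheme) (D : Set (Sym2 MV)) (hs : Finset MF) (F : MF) (σ : Subst)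
    (h : hs = Ξ.hyps.image (MF.substMF σ)) (hc : F = Ξ.concl.substMF σ)
    (hd : Ξ.dv = ∅) : Ξ.Inst ⟨hs, F, D⟩ := by
  refine ⟨σ, ?_, h, hc, ?_⟩
  · intro m n hmn
    rw [hd] at hmn
    exact hmn.elim
  · rintro q ⟨m', n', m, n, hmn, -⟩
    rw [hd] at hmn
    exact hmn.elim

variable {D : Set (Sym2 MV)}

theorem Der.app {a b : MF} (h : Der D (.imp a b)) (h' : Der D a) : Der D b := .mp a b h h'

theorem M {p q r s t : MF} : Der D (.imp p (.imp (.imp q r)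
      (.imp (.imp (.imp s q) (.imp r t)) (.imp q t)))) :=
  .ax _ ax_minimp (by simp [Tsys]) (inst_nodv _ _ _ _ (sb 0 0 0 p q r s t) rfl rfl rfl)

theorem peirce (p q : MF) : Der D (.imp (.imp (.imp p q) p) p) :=
  .ax _ ax_peirce (by simp [Tsys]) (inst_nodv _ _ _ _ (sb 0 0 0 p q p p p) rfl rfl rfl)

theorem contrap (p q : MF) : Der D (.imp (.imp p (.not q)) (.imp q (.not p))) :=
  .ax _ ax_contrap (by simp [Tsys]) (inst_nodv _ _ _ _ (sb 0 0 0 p q p p p) rfl rfl rfl)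

theorem notelim (p q : MF) : Der D (.imp (.not p) (.imp p q)) :=
  .ax _ ax_notelim (by simp [Tsys]) (inst_nodv _ _ _ _ (sb 0 0 0 p q p p p) rfl rfl rfl)

theorem distr (v : ℕ) (p q : MF) :
    Der D (.imp (.all v (.imp p q)) (.imp (.all v p) (.all v q))) :=
  .ax _ ax_ALLdistr (by simp [Tsys]) (inst_nodv _ _ _ _ (sb v 0 0 p q p p p) rfl rfl rfl)

theorem eqrefl (a : ℕ) : Der D (.eq a a) :=
  .ax _ ax_EQrefl (by simp [Tsys])
    (inst_nodv _ _ _ _ (sb a a a (.phi 0) (.phi 0) (.phi 0) (.phi 0) (.phi 0)) rfl rfl rfl)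

theorem eqsymm (a b : ℕ) : Der D (.imp (.eq a b) (.eq b a)) :=
  .ax _ ax_EQsymm (by simp [Tsys])
    (inst_nodv _ _ _ _ (sb a b a (.phi 0) (.phi 0) (.phi 0) (.phi 0) (.phi 0)) rfl rfl rfl)

theorem eqtrans (a b c : ℕ) : Der D (.imp (.eq a b) (.imp (.eq b c) (.eq a c))) :=
  .ax _ ax_EQtrans (by simp [Tsys])
    (inst_nodv _ _ _ _ (sb a b c (.phi 0) (.phi 0) (.phi 0) (.phi 0) (.phi 0)) rfl rfl rfl)

theorem denot (a b : ℕ) (hab : a ≠ b) (hD : s(MV.vr a, MV.vr b) ∈ D) :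
    Der D (.not (.all b (.not (.eq b a)))) := by
  refine Der.app ?_ (eqrefl a)
  refine .ax _ ax_denot (by simp [Tsys])
    ⟨sb a b a (.phi 0) (.phi 0) (.phi 0) (.phi 0) (.phi 0), ?_, rfl, rfl, ?_⟩
  · intro m n hmn
    simp only [ax_denot, Set.mem_singleton_iff, Sym2.eq_iff] at hmn
    rcases hmn with ⟨rfl, rfl⟩ | ⟨rfl, rfl⟩ <;> simp [Subst.appMV, sb, hab, hab.symm]
  · rintro q ⟨m', n', m, n, hmn, hm, hn, rfl⟩
    simp only [ax_denot, Set.mem_singleton_iff, Sym2.eq_iff] at hmn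
    rcases hmn with ⟨rfl, rfl⟩ | ⟨rfl, rfl⟩ <;> simp [Subst.appMV, sb] at hm hn <;>
      subst hm hn
    · exact hD
    · rw [Sym2.eq_swap]; exact hD

theorem vacGen (v : ℕ) (F : MF) (h1 : MV.vr v ∉ F.OC)
    (h2 : ∀ m ∈ F.OC, s(MV.vr v, m) ∈ D) : Der D (.imp F (.all v F)) := by
  refine .ax _ ax_vacGen (by simp [Tsys])
    ⟨sb v v v F F F F F, ?_, rfl, rfl, ?_⟩
  · intro m n hmn
    simp only [ax_vacGen, Set.mem_singleton_iff, Sym2.eq_iff] at hmn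
    rcases hmn with ⟨rfl, rfl⟩ | ⟨rfl, rfl⟩ <;> simp [Subst.appMV, sb, h1]
  · rintro q ⟨m', n', m, n, hmn, hm, hn, rfl⟩
    simp only [ax_vacGen, Set.mem_singleton_iff, Sym2.eq_iff] at hmn
    rcases hmn with ⟨rfl, rfl⟩ | ⟨rfl, rfl⟩ <;> simp [Subst.appMV, sb] at hm hn
    · subst hm; exact h2 _ hn
    · subst hn; rw [Sym2.eq_swap]; exact h2 _ hm

theorem cd0 {p q r s : MF} : Der D (.imp (.imp p q) (.imp (.imp (.imp r p) (.imp q s)) (.imp p s))) := by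
  refine' Der.app M M
  all_goals exact MF.phi 0

theorem cd1 {p q r s t u v : MF} : Der D (.imp (.imp (.imp p q) (.imp (.imp (.imp r s) (.imp (.imp (.imp t r) (.imp s u)) (.imp r u))) v)) (.imp q v)) := by
  refine' Der.app cd0 M
  all_goals exact MF.phi 0

theorem cd2 {p q r s : MF} : Der D (.imp (.imp (.imp p q) (.imp r s)) (.imp r (.imp q s))) := by
  refine' Der.app cd1 cd0
  all_goals exact MF.phi 0

theorem cd3 {p q r : MF} : Der D (.imp p (.imp (.imp p q) (.imp r q))) := by
  refine' Der.app cd2 cd2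
  all_goals exact MF.phi 0

theorem cd4 {p q r s : MF} : Der D (.imp (.imp (.imp p q) r) (.imp q (.imp s r))) := by
  refine' Der.app cd2 cd3
  all_goals exact MF.phi 0

theorem thK {p q : MF} : Der D (.imp p (.imp q p)) := by
  refine' Der.app cd1 cd4
  all_goals exact MF.phi 0

theorem cd6 {p q r s t u : MF} : Der D (.imp (.imp (.imp p (.imp q r)) (.imp (.imp (.imp (.imp s q) (.imp r t)) (.imp q t)) u)) (.imp (.imp q r) u)) := by
  refine' Der.app cd0 cd0
  all_goals exact MF.phi 0

theorem cd7 {p q r s t : MF} : Der D (.imp (.imp (.imp (.imp p q) (.imp (.imp (.imp r p) (.imp q s)) (.imp p s))) t) t) := by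
  refine' Der.app cd1 cd1
  all_goals exact MF.phi 0

theorem cd8 {p q : MF} : Der D (.imp p (.imp (.imp p q) q)) := by
  refine' Der.app cd2 cd7
  all_goals exact MF.phi 0

theorem cd9 {p q r : MF} : Der D (.imp (.imp (.imp p q) r) (.imp q r)) := by
  refine' Der.app cd2 cd8
  all_goals exact MF.phi 0

theorem cd10 {p q r s : MF} : Der D (.imp p (.imp (.imp (.imp q r) s) (.imp r s))) := by
  refine' Der.app thK cd9
  all_goals exact MF.phi 0

theorem thB2 {p q r : MF} : Der D (.imp (.imp p q) (.imp (.imp q r) (.imp p r))) := by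
  refine' Der.app cd6 cd10
  all_goals exact MF.phi 0

theorem cd12 {p q r s t u : MF} : Der D (.imp (.imp (.imp p (.imp (.imp q r) (.imp s t))) (.imp (.imp s (.imp r t)) u)) (.imp (.imp (.imp q r) (.imp s t)) u)) := by
  refine' Der.app cd0 cd2
  all_goals exact MF.phi 0

theorem cd13 {p q r s t u : MF} : Der D (.imp (.imp (.imp p q) (.imp r s)) (.imp (.imp (.imp t r) (.imp (.imp q s) u)) (.imp r u))) := by
  refine' Der.app cd12 M
  all_goals exact MF.phi 0

theorem cd14 {p q r s t : MF} : Der D (.imp (.imp (.imp p q) (.imp (.imp r s) t)) (.imp (.imp q s) (.imp q t))) := by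
  refine' Der.app cd2 cd13
  all_goals exact MF.phi 0

theorem cd15 {p q r s t : MF} : Der D (.imp (.imp p q) (.imp r (.imp (.imp (.imp s p) (.imp q t)) (.imp p t)))) := by
  refine' Der.app cd2 M
  all_goals exact MF.phi 0

theorem cd16 {p q r s t : MF} : Der D (.imp p (.imp (.imp (.imp q r) (.imp (.imp (.imp r s) s) t)) (.imp r t))) := by
  refine' Der.app cd15 cd8
  all_goals exact MF.phi 0

theorem cd17 {p q r s : MF} : Der D (.imp (.imp p (.imp (.imp (.imp q r) r) s)) (.imp p (.imp q s))) := by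
  refine' Der.app cd14 cd16
  all_goals exact MF.phi 0

theorem thC {p q r : MF} : Der D (.imp (.imp p (.imp q r)) (.imp q (.imp p r))) := by
  refine' Der.app cd17 thB2
  all_goals exact MF.phi 0

theorem cd19 {p q r s t : MF} : Der D (.imp (.imp (.imp (.imp (.imp p q) (.imp r s)) (.imp q s)) t) (.imp (.imp q r) t)) := by
  refine' Der.app cd9 cd6
  all_goals exact MF.phi 0

theorem cd20 {p q r s : MF} : Der D (.imp (.imp (.imp p q) (.imp (.imp (.imp q r) r) s)) (.imp q s)) := by
  refine' Der.app cd0 cd8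
  all_goals exact MF.phi 0

theorem cd21 {p q r : MF} : Der D (.imp p (.imp (.imp (.imp (.imp p q) q) r) r)) := by
  refine' Der.app cd2 cd20
  all_goals exact MF.phi 0

theorem cd22 {p q : MF} : Der D (.imp (.imp (.imp p q) p) (.imp (.imp p q) q)) := by
  refine' Der.app cd6 cd21
  all_goals exact MF.phi 0

theorem cd23 {p q r : MF} : Der D (.imp (.imp (.imp (.imp (.imp p q) p) (.imp (.imp p q) q)) r) r) := by
  refine' Der.app cd8 cd22
  all_goals exact MF.phi 0

theorem thW {p q : MF} : Der D (.imp (.imp p (.imp p q)) (.imp p q)) := by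
  refine' Der.app cd19 cd23
  all_goals exact MF.phi 0


/-- Propositional derivability from a context. -/
inductive Pf (D : Set (Sym2 MV)) (Γ : List MF) : MF → Prop
  | hyp (a : MF) : a ∈ Γ → Pf D Γ a
  | thm (a : MF) : Der D a → Pf D Γ a
  | mp (a b : MF) : Pf D Γ (.imp a b) → Pf D Γ a → Pf D Γ b

theorem Pf.app {Γ : List MF} {a b : MF} (h : Pf D Γ (.imp a b)) (h' : Pf D Γ a) : Pf D Γ b :=
  .mp a b h h'

theorem ruleS {Γ : List MF} {a b c : MF} (h : Pf D Γ (.imp a (.imp b c)))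
    (h' : Pf D Γ (.imp a b)) : Pf D Γ (.imp a c) :=
  Pf.app (.thm _ thW) (Pf.app (Pf.app (.thm _ thB2) h') (Pf.app (.thm _ thC) h))

theorem Pf.ded {Γ : List MF} {a b : MF} (h : Pf D (a :: Γ) b) : Pf D Γ (.imp a b) := by
  induction h with
  | hyp c hc =>
    rcases List.mem_cons.1 hc with h | hc
    · subst h
      exact ruleS (.thm _ (thK (q := .imp c c))) (.thm _ thK)
    · exact Pf.app (.thm _ thK) (.hyp _ hc)
  | thm c hc => exact .thm _ (Der.app thK hc)
  | mp c d _ _ ih1 ih2 => exact ruleS ih1 ih2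

theorem Pf.close {a : MF} (h : Pf D [] a) : Der D a := by
  induction h with
  | hyp c hc => simp at hc
  | thm c hc => exact hc
  | mp c d _ _ ih1 ih2 => exact Der.app ih1 ih2

theorem Pf.h0 {Γ : List MF} {a : MF} : Pf D (a :: Γ) a := .hyp _ (by simp)
theorem Pf.h1 {Γ : List MF} {a b : MF} : Pf D (b :: a :: Γ) a := .hyp _ (by simp)
theorem Pf.h2 {Γ : List MF} {a b c : MF} : Pf D (c :: b :: a :: Γ) a := .hyp _ (by simp)

theorem Pf.exfalso {Γ : List MF} {a b : MF} (h : Pf D Γ (.not a)) (h' : Pf D Γ a) : Pf D Γ b :=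
  Pf.app (Pf.app (.thm _ (notelim a b)) h) h'

theorem Pf.notI {Γ : List MF} {a : MF} (h : Pf D (a :: Γ) (.not (.eq 0 0))) :
    Pf D Γ (.not a) :=
  Pf.app (Pf.app (.thm _ (contrap _ _)) h.ded) (.thm _ (eqrefl 0))

theorem Pf.weak {Γ : List MF} {a c : MF} (h : Pf D Γ a) : Pf D (c :: Γ) a := by
  induction h with
  | hyp b hb => exact .hyp _ (List.mem_cons_of_mem _ hb)
  | thm b hb => exact .thm _ hb
  | mp b d _ _ ih1 ih2 => exact .mp _ _ ih1 ih2

theorem Pf.byContra {Γ : List MF} {a : MF} (h : Pf D (.not a :: Γ) a) : Pf D Γ a := by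
  refine Pf.app (.thm _ (peirce a (.not (.eq 0 0)))) (Pf.ded ?_)
  exact Pf.app h.ded.weak (Pf.app (Pf.app (.thm _ (contrap _ _)) .h0) (.thm _ (eqrefl 0)))

theorem syl {a b c : MF} (h : Der D (.imp a b)) (h' : Der D (.imp b c)) : Der D (.imp a c) :=
  Der.app (Der.app thB2 h) h'

theorem allmono {a b : MF} (v : ℕ) (h : Der D (.imp a b)) :
    Der D (.imp (.all v a) (.all v b)) :=
  Der.app (distr v a b) (.gen v _ h)

theorem alpha {a b : ℕ} {F G : MF} (h : Der D (.imp (.eq a b) (.imp F G))) (hab : a ≠ b)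
    (ha : MV.vr a ∉ G.OC) (hG : ∀ m ∈ G.OC, s(MV.vr a, m) ∈ D)
    (hba : s(MV.vr b, MV.vr a) ∈ D) : Der D (.imp (.all a F) G) := by
  have h1 : Der D (.imp F (.imp (.not G) (.not (.eq a b)))) := by
    refine Pf.close (Pf.ded (Pf.ded (Pf.notI ?_)))
    exact Pf.exfalso .h1 (Pf.app (Pf.app (.thm _ h) .h0) .h2)
  have h2 := syl (allmono a h1) (distr a _ _)
  have h3 : Der D (.imp (.not G) (.all a (.not G))) := vacGen a _ ha hG
  have h4 := denot b a hab.symm hba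
  refine Pf.close (Pf.ded (Pf.byContra ?_))
  exact Pf.exfalso (.thm _ h4) (Pf.app (Pf.app (.thm _ h2) .h1) (Pf.app (.thm _ h3) .h0))

theorem alphaAll {a b : ℕ} {F G : MF} (h : Der D (.imp (.eq a b) (.imp F G))) (hab : a ≠ b)
    (ha : MV.vr a ∉ G.OC) (hG : ∀ m ∈ G.OC, s(MV.vr a, m) ∈ D)
    (hba : s(MV.vr b, MV.vr a) ∈ D) (hb : MV.vr b ∉ F.OC)
    (hF : ∀ m ∈ F.OC, s(MV.vr b, m) ∈ D) :
    Der D (.imp (.all a F) (.all b G)) := by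
  refine syl (vacGen b _ ?_ ?_) (allmono b (alpha h hab ha hG hba))
  · simp [MF.OC, hb, hab.symm]
  · rintro m (rfl | hm)
    · exact hba
    · exact hF m hm

/-- Renaming of a variable index. -/
def rv (y z i : ℕ) : ℕ := if i = y then z else i

/-- Renaming all occurrences of `y` to `z`. -/
def ren (y z : ℕ) : MF → MF
  | .phi i => .phi i
  | .eq i j => .eq (rv y z i) (rv y z j)
  | .imp a b => .imp (ren y z a) (ren y z b)
  | .not a => .not (ren y z a)
  | .all i a => .all (rv y z i) (ren y z a)

theorem rv_cases (y z i : ℕ) : MV.vr (rv y z i) = MV.vr z ∨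
    (MV.vr (rv y z i) = MV.vr i ∧ MV.vr i ≠ MV.vr y) := by
  unfold rv
  split_ifs with h <;> simp [h]

theorem ren_OC (y z : ℕ) (F : MF) : ∀ m ∈ (ren y z F).OC,
    m = MV.vr z ∨ (m ∈ F.OC ∧ m ≠ MV.vr y) := by
  induction F with
  | phi i => intro m hm; simp only [ren, MF.OC, Set.mem_singleton_iff] at hm; simp [hm, MF.OC]
  | eq i j =>
    rintro m (rfl | rfl)
    · rcases rv_cases y z i with h | ⟨h, h'⟩
      · exact .inl h
      · rw [h]; exact .inr ⟨by simp [MF.OC], h'⟩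
    · rcases rv_cases y z j with h | ⟨h, h'⟩
      · exact .inl h
      · rw [h]; exact .inr ⟨by simp [MF.OC], h'⟩
  | imp a b iha ihb =>
    rintro m (hm | hm)
    · exact (iha m hm).imp_right fun h => ⟨.inl h.1, h.2⟩
    · exact (ihb m hm).imp_right fun h => ⟨.inr h.1, h.2⟩
  | not a ih => exact ih
  | all i a ih =>
    rintro m (rfl | hm)
    · rcases rv_cases y z i with h | ⟨h, h'⟩
      · exact .inl h
      · rw [h]; exact .inr ⟨by simp [MF.OC], h'⟩
    · exact (ih m hm).imp_right fun h => ⟨.inr h.1, h.2⟩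

theorem finOC (F : MF) : F.OC.Finite := by
  induction F with
  | phi i => simp [MF.OC]
  | eq i j => simp [MF.OC]
  | imp a b iha ihb => exact iha.union ihb
  | not a ih => exact ih
  | all i a ih => exact ih.insert _

theorem eq_rv (y z i : ℕ) : Der D (.imp (.eq y z) (.eq i (rv y z i))) := by
  unfold rv
  split_ifs with h
  · subst h; exact Pf.close (Pf.ded .h0)
  · exact Der.app thK (eqrefl i)

theorem ren_eq (W : Set MV) (y z : ℕ) (hyz : y ≠ z)
    (hD : ∀ v m, (v = y ∨ v = z) → m ∈ W → m ≠ MV.vr v → s(MV.vr v, m) ∈ D)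
    (hy : MV.vr y ∈ W) (hz : MV.vr z ∈ W) (F : MF) (hF : F.OC ⊆ W) (hzF : MV.vr z ∉ F.OC) :
    Der D (.imp (.eq y z) (.imp F (ren y z F))) ∧
    Der D (.imp (.eq y z) (.imp (ren y z F) F)) := by
  induction F with
  | phi i =>
    exact ⟨Pf.close (Pf.ded (Pf.ded .h0)), Pf.close (Pf.ded (Pf.ded .h0))⟩
  | eq i j =>
    have hi : Pf D [MF.eq i j, .eq y z] (.eq i (rv y z i)) := Pf.app (.thm _ (eq_rv y z i)) .h1
    have hj : Pf D [MF.eq i j, .eq y z] (.eq j (rv y z j)) := Pf.app (.thm _ (eq_rv y z j)) .h1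
    have hi' : Pf D [MF.eq (rv y z i) (rv y z j), .eq y z] (.eq i (rv y z i)) :=
      Pf.app (.thm _ (eq_rv y z i)) .h1
    have hj' : Pf D [MF.eq (rv y z i) (rv y z j), .eq y z] (.eq j (rv y z j)) :=
      Pf.app (.thm _ (eq_rv y z j)) .h1
    constructor
    · refine Pf.close (Pf.ded (Pf.ded ?_))
      have hi2 := Pf.app (.thm _ (eqsymm _ _)) hi
      exact Pf.app (Pf.app (.thm _ (eqtrans _ _ _)) hi2)
        (Pf.app (Pf.app (.thm _ (eqtrans _ _ _)) .h0) hj)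
    · refine Pf.close (Pf.ded (Pf.ded ?_))
      have hj2 := Pf.app (.thm _ (eqsymm _ _)) hj'
      exact Pf.app (Pf.app (.thm _ (eqtrans _ _ _)) hi')
        (Pf.app (Pf.app (.thm _ (eqtrans _ _ _)) .h0) hj2)
  | imp a b iha ihb =>
    obtain ⟨a1, a2⟩ := iha (fun m hm => hF (.inl hm)) (fun h => hzF (.inl h))
    obtain ⟨b1, b2⟩ := ihb (fun m hm => hF (.inr hm)) (fun h => hzF (.inr h))
    constructor
    · refine Pf.close (Pf.ded (Pf.ded (Pf.ded ?_)))
      exact Pf.app (Pf.app (.thm _ b1) .h2) (Pf.app .h1 (Pf.app (Pf.app (.thm _ a2) .h2) .h0))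
    · refine Pf.close (Pf.ded (Pf.ded (Pf.ded ?_)))
      exact Pf.app (Pf.app (.thm _ b2) .h2) (Pf.app .h1 (Pf.app (Pf.app (.thm _ a1) .h2) .h0))
  | not a ih =>
    obtain ⟨a1, a2⟩ := ih hF hzF
    constructor
    · refine Pf.close (Pf.ded (Pf.ded (Pf.notI ?_)))
      exact Pf.exfalso .h1 (Pf.app (Pf.app (.thm _ a2) .h2) .h0)
    · refine Pf.close (Pf.ded (Pf.ded (Pf.notI ?_)))
      exact Pf.exfalso .h1 (Pf.app (Pf.app (.thm _ a1) .h2) .h0)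
  | all u a ih =>
    have haW : a.OC ⊆ W := fun m hm => hF (.inr hm)
    have hza : MV.vr z ∉ a.OC := fun h => hzF (.inr h)
    have huW : MV.vr u ∈ W := hF (.inl rfl)
    have huz : u ≠ z := by rintro rfl; exact hzF (.inl rfl)
    obtain ⟨a1, a2⟩ := ih haW hza
    by_cases huy : u = y
    · subst huy
      have hr : ren u z (.all u a) = .all z (ren u z a) := by simp [ren, rv]
      rw [hr]
      have ho : ∀ m ∈ (ren u z a).OC, m ∈ W ∧ m ≠ MV.vr u := by
        intro m hm
        rcases ren_OC u z a m hm with rfl | ⟨h1, h2⟩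
        · exact ⟨hz, by simpa using huz.symm⟩
        · exact ⟨haW h1, h2⟩
      have huv : MV.vr u ≠ MV.vr z := by simpa using huz
      have a2' : Der D (.imp (.eq z u) (.imp (ren u z a) a)) := syl (eqsymm z u) a2
      constructor
      · refine Der.app thK (alphaAll a1 huz (fun h => (ho _ h).2 rfl)
          (fun m hm => hD u m (.inl rfl) (ho m hm).1 (ho m hm).2)
          (hD z _ (.inr rfl) hy huv) hza
          (fun m hm => hD z m (.inr rfl) (haW hm) (by rintro rfl; exact hza hm)))
      · refine Der.app thK (alphaAll a2' huz.symm hza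
          (fun m hm => hD z m (.inr rfl) (haW hm) (by rintro rfl; exact hza hm))
          (hD u _ (.inl rfl) hz huv.symm) (fun h => (ho _ h).2 rfl)
          (fun m hm => hD u m (.inl rfl) (ho m hm).1 (ho m hm).2))
    · have hr : ren y z (.all u a) = .all u (ren y z a) := by simp [ren, rv, huy]
      rw [hr]
      have hv : Der D (.imp (.eq y z) (.all u (.eq y z))) := by
        refine vacGen u _ ?_ ?_
        · simp [MF.OC, huy, huz]
        · rintro m (rfl | rfl)
          · rw [Sym2.eq_swap]; exact hD y _ (.inl rfl) huW (by simpa using huy)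
          · rw [Sym2.eq_swap]; exact hD z _ (.inr rfl) huW (by simpa using huz)
      exact ⟨syl hv (syl (allmono u a1) (distr u _ _)), syl hv (syl (allmono u a2) (distr u _ _))⟩

theorem comm_der (W : Set MV) (x y z : ℕ) (hyz : y ≠ z) (hxy : x ≠ y) (hxz : x ≠ z)
    (hD : ∀ v m, (v = y ∨ v = z) → m ∈ W → m ≠ MV.vr v → s(MV.vr v, m) ∈ D)
    (hx : MV.vr x ∈ W) (hy : MV.vr y ∈ W) (hz : MV.vr z ∈ W) (F : MF) (hF : F.OC ⊆ W)
    (hzF : MV.vr z ∉ F.OC) :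
    Der D (.imp (.all x (.all y F)) (.all y (.all x F))) := by
  have a1 := (ren_eq W y z hyz hD hy hz F hF hzF).1
  have hzF' : MV.vr z ∉ (MF.all x F).OC := by
    rintro (h | h)
    · exact hxz (by simpa using h.symm)
    · exact hzF h
  have hF' : (MF.all x F).OC ⊆ W := by
    rintro m (rfl | h)
    · exact hx
    · exact hF h
  have a2 := (ren_eq W y z hyz hD hy hz (.all x F) hF' hzF').2
  have hr : ren y z (.all x F) = .all x (ren y z F) := by simp [ren, rv, hxy]
  rw [hr] at a2
  have ho : ∀ m ∈ (ren y z F).OC, m ∈ W ∧ m ≠ MV.vr y := by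
    intro m hm
    rcases ren_OC y z F m hm with rfl | ⟨h1, h2⟩
    · exact ⟨hz, by simpa using hyz.symm⟩
    · exact ⟨hF h1, h2⟩
  have ho' : ∀ m ∈ (MF.all x (ren y z F)).OC, m ∈ W ∧ m ≠ MV.vr y := by
    rintro m (rfl | hm)
    · exact ⟨hx, by simpa using hxy⟩
    · exact ho m hm
  have hyzv : MV.vr y ≠ MV.vr z := by simpa using hyz
  have b1 : Der D (.imp (.all y F) (ren y z F)) :=
    alpha a1 hyz (fun h => (ho _ h).2 rfl)
      (fun m hm => hD y m (.inl rfl) (ho m hm).1 (ho m hm).2) (hD z _ (.inr rfl) hy hyzv)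
  have b2 := allmono z (allmono x b1)
  have b3 : Der D (.imp (.all x (.all y F)) (.all z (.all x (.all y F)))) := by
    have hne : MV.vr z ∉ (MF.all x (.all y F)).OC := by
      rintro (h | h | h)
      · exact hxz (by simpa using h.symm)
      · exact hyzv h.symm
      · exact hzF h
    refine vacGen z _ hne (fun m hm => hD z m (.inr rfl) ?_ (by rintro rfl; exact hne hm))
    rcases hm with rfl | rfl | h
    · exact hx
    · exact hy
    · exact hF h
  have b4 : Der D (.imp (.all z (.all x (ren y z F))) (.all y (.all x F))) :=
    alphaAll (syl (eqsymm z y) a2) hyz.symm hzF'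
      (fun m hm => hD z m (.inr rfl) (hF' hm) (by rintro rfl; exact hzF' hm))
      (hD y _ (.inl rfl) hz hyzv.symm) (fun h => (ho' _ h).2 rfl)
      (fun m hm => hD y m (.inl rfl) (ho' m hm).1 (ho' m hm).2)
  exact syl b3 (syl b2 b4)

/-- Every entry of the list is justified by earlier entries. -/
def Just (D : Set (Sym2 MV)) (P : List MF) : Prop :=
  ∀ (k : ℕ) (hk : k < P.length), ∃ hs : Finset MF,
      (∀ h ∈ hs, ∃ (l : ℕ) (hl : l < k), P.get ⟨l, hl.trans hk⟩ = h) ∧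
      ∃ Ξ ∈ Tsys, Ξ.Inst ⟨hs, P.get ⟨k, hk⟩, D⟩

theorem Just.append {P Q : List MF} (hP : Just D P) (hQ : Just D Q) : Just D (P ++ Q) := by
  intro k hk
  by_cases h : k < P.length
  · obtain ⟨hs, h1, h2⟩ := hP k h
    refine ⟨hs, ?_, ?_⟩
    · intro f hf
      obtain ⟨l, hl, e⟩ := h1 f hf
      refine ⟨l, hl, ?_⟩
      rw [← e]
      simp [List.getElem_append_left (hl.trans h)]
    · simpa [List.getElem_append_left h] using h2
  · have hk' : k - P.length < Q.length := by rw [List.length_append] at hk; omega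
    obtain ⟨hs, h1, h2⟩ := hQ (k - P.length) hk'
    refine ⟨hs, ?_, ?_⟩
    · intro f hf
      obtain ⟨l, hl, e⟩ := h1 f hf
      refine ⟨P.length + l, by omega, ?_⟩
      rw [← e]
      simp
    · simpa [List.getElem_append_right (not_lt.1 h)] using h2

theorem Just.snoc {P : List MF} {F : MF} (hP : Just D P) (hs : Finset MF)
    (h : ∀ f ∈ hs, f ∈ P) (h2 : ∃ Ξ ∈ Tsys, Ξ.Inst ⟨hs, F, D⟩) : Just D (P ++ [F]) := by
  intro k hk
  by_cases hkP : k < P.length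
  · obtain ⟨hs, h1, h2⟩ := hP k hkP
    refine ⟨hs, ?_, ?_⟩
    · intro f hf
      obtain ⟨l, hl, e⟩ := h1 f hf
      refine ⟨l, hl, ?_⟩
      rw [← e]
      simp [List.getElem_append_left (hl.trans hkP)]
    · simpa [List.getElem_append_left hkP] using h2
  · have hk' : k = P.length := by simp at hk; omega
    subst hk'
    refine ⟨hs, ?_, by simpa using h2⟩
    intro f hf
    obtain ⟨l, hl, e⟩ := List.mem_iff_getElem.1 (h f hf)
    refine ⟨l, hl, ?_⟩
    rw [← e]
    simp [List.getElem_append_left hl]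

theorem Der.toList {F : MF} (h : Der D F) : ∃ P, Just D (P ++ [F]) := by
  induction h with
  | ax F Ξ h1 h2 =>
    exact ⟨[], Just.snoc (P := []) (fun k hk => absurd hk (by simp)) ∅ (by simp) ⟨Ξ, h1, h2⟩⟩
  | mp a b _ _ ih1 ih2 =>
    obtain ⟨P, hP⟩ := ih1
    obtain ⟨Q, hQ⟩ := ih2
    refine ⟨_, (hP.append hQ).snoc {a, .imp a b} (by simp) ⟨ax_mp, by simp [Tsys], ?_⟩⟩
    refine inst_nodv _ _ _ _ (sb 0 0 0 a b a a a) ?_ rfl rfl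
    simp [ax_mp, Finset.image_insert, MF.substMF, sb]
  | gen v a _ ih =>
    obtain ⟨P, hP⟩ := ih
    refine ⟨_, hP.snoc {a} (by simp) ⟨ax_gen, by simp [Tsys], ?_⟩⟩
    refine inst_nodv _ _ _ _ (sb v 0 0 a a a a a) ?_ rfl rfl
    simp [ax_gen, MF.substMF, sb]

theorem Scheme_Inst_mono {Ξ : Scheme} {hs : Finset MF} {F : MF} {E : Set (Sym2 MV)} (hDE : D ⊆ E)
    (h : Ξ.Inst ⟨hs, F, D⟩) : Ξ.Inst ⟨hs, F, E⟩ := by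
  obtain ⟨σ, h1, h2, h3, h4⟩ := h
  exact ⟨σ, h1, h2, h3, h4.trans hDE⟩

end MegAux

/-- For every metaformula Φ and variable metavariables x and y, the scheme
∀x∀y Φ → ∀y∀x Φ with DV conditions exactly the pairs {y, m} for
m ∈ ({x} ∪ OC(Φ)) \ {y}, is provable from the subsystem T. -/
theorem ALLcomm_object_provable (Φ : MF) (x y : ℕ) :
    Provable Tsys
      ⟨∅, .imp (.all x (.all y Φ)) (.all y (.all x Φ)),
        {q | ∃ m ∈ insert (MV.vr x) Φ.OC, m ≠ MV.vr y ∧ q = s(MV.vr y, m)}⟩ := by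
  classical
  obtain ⟨z, hzn⟩ : ∃ z, MV.vr z ∉ insert (MV.vr x) (insert (MV.vr y) Φ.OC) := by
    have hfin := ((MegAux.finOC Φ).insert (MV.vr y)).insert (MV.vr x)
    have hinj : Function.Injective MV.vr := fun a b h => by simpa using h
    obtain ⟨z, hz⟩ := (hfin.preimage hinj.injOn).exists_notMem
    exact ⟨z, hz⟩
  simp only [Set.mem_insert_iff, MV.vr.injEq, not_or] at hzn
  obtain ⟨hzx, hzy, hzF⟩ := hzn
  set W : Set MV := insert (MV.vr z) (insert (MV.vr x) (insert (MV.vr y) Φ.OC)) with hW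
  set D : Set (Sym2 MV) := {q | ∃ v m, (v = y ∨ v = z) ∧ m ∈ W ∧ m ≠ MV.vr v ∧
    q = s(MV.vr v, m)} with hDdef
  have hder : MegAux.Der D (.imp (.all x (.all y Φ)) (.all y (.all x Φ))) := by
    by_cases hxy : x = y
    · subst hxy
      exact MegAux.Pf.close (MegAux.Pf.ded .h0)
    · refine MegAux.comm_der W x y z (Ne.symm hzy) hxy (Ne.symm hzx) ?_ ?_ ?_ ?_ Φ ?_ hzF
      · intro v m hv hm hne
        exact ⟨v, m, hv, hm, hne, rfl⟩
      · simp [hW]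
      · simp [hW]
      · simp [hW]
      · intro m hm
        simp [hW, hm]
  obtain ⟨P, hP⟩ := hder.toList
  obtain ⟨Q, hQ⟩ := (MegAux.eqrefl (D := D) z).toList
  have hJ := hQ.append hP
  refine ⟨(Q ++ [.eq z z]) ++ (P ++ [.imp (.all x (.all y Φ)) (.all y (.all x Φ))]),
    by simp, by simp [← List.append_assoc], ?_⟩
  intro k hk
  right
  obtain ⟨hs, h1, Ξ, hΞ, h2⟩ := hJ k hk
  refine ⟨hs, h1, Ξ, hΞ, MegAux.Scheme_Inst_mono ?_ h2⟩
  have hWP : ∀ m ∈ W, m ∈ listOC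
      ((Q ++ [.eq z z]) ++ (P ++ [.imp (.all x (.all y Φ)) (.all y (.all x Φ))])) := by
    rintro m (rfl | hm)
    · exact ⟨.eq z z, by simp, by simp [MF.OC]⟩
    · exact ⟨.imp (.all x (.all y Φ)) (.all y (.all x Φ)), by simp, .inl hm⟩
  rintro q ⟨v, m, hv, hm, hne, rfl⟩
  by_cases hcase : v = z ∨ m = MV.vr z
  · right
    have hzO : MV.vr z ∉ Scheme.OC ⟨∅, .imp (.all x (.all y Φ)) (.all y (.all x Φ)),
        {q | ∃ m ∈ insert (MV.vr x) Φ.OC, m ≠ MV.vr y ∧ q = s(MV.vr y, m)}⟩ := by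
      simp [Scheme.OC, MF.OC, hzx, hzy, hzF]
    rcases hcase with rfl | rfl
    · exact ⟨MV.vr v, m, hWP _ (by simp [hW]), hzO, hWP _ hm, rfl⟩
    · refine ⟨MV.vr z, MV.vr v, hWP _ hm, hzO, hWP _ ?_, Sym2.eq_swap⟩
      rcases hv with rfl | rfl <;> simp [hW]
  · left
    push Not at hcase
    obtain ⟨hvz, hmz⟩ := hcase
    have hvy : v = y := hv.resolve_right hvz
    subst hvy
    refine ⟨m, ?_, hne, rfl⟩
    simpa [hW, hmz, hne] using hm
end

section
/- Every true quantifier-free scheme (a scheme whose hypotheses and conclusion contain no universal quantifier) is supertrue. -/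
set_option autoImplicit false

/-- The identity substitution. -/
def Subst.idS : Subst := ⟨id, MF.phi, by simp, by simp⟩

theorem MF.substMF_idS (f : MF) : f.substMF Subst.idS = f := by
  induction f <;> simp_all [MF.substMF, Subst.idS]

theorem Subst.dvMap_idS (D : Set (Sym2 MV)) : Subst.idS.dvMap D ⊆ D := by
  have key : ∀ m m' : MV, m ∈ Subst.idS.appMV m' → m = m' := by
    intro m m' h
    cases m' <;> simpa [Subst.appMV, Subst.idS, MF.OC] using h
  rintro q ⟨m', n', m, n, h, hm, hn, rfl⟩
  rw [key _ _ hm, key _ _ hn]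
  exact h

theorem MF.mem_OC_substMF (σ : Subst) (f : MF) (m : MV) (h : m ∈ (f.substMF σ).OC) :
    ∃ n ∈ f.OC, m ∈ σ.appMV n := by
  induction f with
  | phi i => exact ⟨_, rfl, h⟩
  | eq i j =>
    rcases h with h | h
    · exact ⟨.vr i, Or.inl rfl, h⟩
    · exact ⟨.vr j, Or.inr rfl, h⟩
  | imp a b iha ihb =>
    rcases h with h | h
    · obtain ⟨n, h1, h2⟩ := iha h
      exact ⟨n, Or.inl h1, h2⟩
    · obtain ⟨n, h1, h2⟩ := ihb h
      exact ⟨n, Or.inr h1, h2⟩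
  | not a ih => exact ih h
  | all i a ih =>
    rcases h with h | h
    · exact ⟨.vr i, Or.inl rfl, h⟩
    · obtain ⟨n, h1, h2⟩ := ih h
      exact ⟨n, Or.inr h1, h2⟩

theorem MF.mem_vars_osubst (τ : OSubst) (f : MF) (v : ℕ) (h : v ∈ (f.osubst τ).vars) :
    ∃ n ∈ f.OC, v ∈ τ.appVars n := by
  induction f with
  | phi i => exact ⟨_, rfl, h⟩
  | eq i j =>
    rcases h with h | h
    · exact ⟨.vr i, Or.inl rfl, h⟩
    · exact ⟨.vr j, Or.inr rfl, h⟩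
  | imp a b iha ihb =>
    rcases h with h | h
    · obtain ⟨n, h1, h2⟩ := iha h
      exact ⟨n, Or.inl h1, h2⟩
    · obtain ⟨n, h1, h2⟩ := ihb h
      exact ⟨n, Or.inr h1, h2⟩
  | not a ih => exact ih h
  | all i a ih =>
    rcases h with h | h
    · exact ⟨.vr i, Or.inl rfl, h⟩
    · obtain ⟨n, h1, h2⟩ := ih h
      exact ⟨n, Or.inr h1, h2⟩

theorem MF.mem_OC_transfAux (i j : ℕ) (f : MF) (ins : Bool) (m : MV)
    (h : m ∈ (f.transfAux i j ins).OC) : m ∈ f.OC ∨ (ins = true ∧ m = .vr i) := by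
  induction f generalizing ins with
  | phi k => exact Or.inl h
  | eq a b =>
    simp only [MF.transfAux, MF.OC, Set.mem_insert_iff, Set.mem_singleton_iff] at h ⊢
    split_ifs at h <;> tauto
  | imp a b iha ihb =>
    rcases h with h | h
    · rcases iha _ h with h | h
      · exact Or.inl (Or.inl h)
      · exact Or.inr h
    · rcases ihb _ h with h | h
      · exact Or.inl (Or.inr h)
      · exact Or.inr h
  | not a ih => exact ih _ h
  | all k a ih =>
    rcases h with h | h
    · split_ifs at h with hc
      · exact Or.inr ⟨hc.1, h⟩
      · exact Or.inl (Or.inl h)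
    · rcases ih _ h with h | ⟨h1, h2⟩
      · exact Or.inl (Or.inr h)
      · simp only [Bool.or_eq_true, decide_eq_true_eq] at h1
        rcases h1 with h1 | h1
        · exact Or.inr ⟨h1, h2⟩
        · subst h1
          exact Or.inl (Or.inl h2)

/-- The composite object-substitution: `σ`, then `σ'`, then transform, then `τ`. -/
def compO (σ σ' : Subst) (i j : ℕ) (τ : OSubst) : OSubst :=
  ⟨fun k => τ.vr (σ'.vr (σ.vr k)),
   fun k => (((σ.fm k).substMF σ').transform i j).osubst τ⟩

theorem MF.osubst_compO (σ σ' : Subst) (i j : ℕ) (τ : OSubst) (f : MF) (hf : f.QFree) :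
    f.osubst (compO σ σ' i j τ) =
      (((f.substMF σ).substMF σ').transform i j).osubst τ := by
  induction f with
  | phi k => rfl
  | eq a b => simp [MF.osubst, compO, MF.substMF, MF.transform, MF.transfAux]
  | imp a b iha ihb =>
    have h1 := iha hf.1
    have h2 := ihb hf.2
    simp only [MF.osubst, MF.substMF, MF.transform, MF.transfAux] at *
    rw [h1, h2]
  | not a ih =>
    have h1 := ih hf
    simp only [MF.osubst, MF.substMF, MF.transform, MF.transfAux] at *
    rw [h1]
  | all k a ih => exact hf.elim

theorem mem_appVars_compO (σ σ' : Subst) (i j : ℕ) (τ : OSubst) (m : MV) (v : ℕ)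
    (h : v ∈ (compO σ σ' i j τ).appVars m) :
    ∃ m1 ∈ σ.appMV m, ∃ m2 ∈ σ'.appMV m1, v ∈ τ.appVars m2 := by
  cases m with
  | vr k => exact ⟨_, rfl, _, rfl, h⟩
  | fm k =>
    obtain ⟨m2, h2, hv⟩ := MF.mem_vars_osubst _ _ _ h
    rcases MF.mem_OC_transfAux _ _ _ _ _ h2 with h3 | h3
    · obtain ⟨m1, h4, h5⟩ := MF.mem_OC_substMF _ _ _ h3
      exact ⟨m1, h4, m2, h5, hv⟩
    · simp at h3

/-- An instance (or the scheme itself) comes from some substitution. -/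
theorem exists_subst (Φ Ψ : Scheme) (h : Ψ = Φ ∨ Φ.Inst Ψ) :
    ∃ σ : Subst, Ψ.hyps = Φ.hyps.image (MF.substMF σ) ∧
      Ψ.concl = Φ.concl.substMF σ ∧ σ.dvMap Φ.dv ⊆ Ψ.dv ∧
      ∀ f : MF, (⟨∅, f.substMF σ, Ψ.dv⟩ : Scheme) = ⟨∅, f, Φ.dv⟩ ∨
        Scheme.Inst ⟨∅, f, Φ.dv⟩ ⟨∅, f.substMF σ, Ψ.dv⟩ := by
  rcases h with rfl | ⟨σ, h1, h2, h3, h4⟩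
  · refine ⟨Subst.idS, ?_, (MF.substMF_idS _).symm, Subst.dvMap_idS _, fun f => Or.inl ?_⟩
    · have : MF.substMF Subst.idS = id := funext MF.substMF_idS
      rw [this, Finset.image_id]
    · rw [MF.substMF_idS]
  · exact ⟨σ, h2, h3, h4, fun f => Or.inr ⟨σ, h1, by simp, rfl, h4⟩⟩

/-- Every true quantifier-free scheme is supertrue. -/
theorem qfree_true_supertrue (Φ : Scheme) (hq : Φ.QFree) (ht : Φ.IsTrue) :
    Φ.Supertrue := by
  intro Ψ hΨ hpre Θ hΘ i j hij τ hτ D hD _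
  obtain ⟨σ, hs1, hs2, hs3, _⟩ := exists_subst Φ Ψ hΨ
  obtain ⟨σ', _, ht2, ht3, ht4⟩ := exists_subst _ Θ hΘ
  have hleg : (compO σ σ' i j τ).Legit Φ := by
    intro m n hmn
    rw [Set.eq_empty_iff_forall_notMem]
    rintro v ⟨hv1, hv2⟩
    obtain ⟨m1, hm1, m2, hm2, hvm⟩ := mem_appVars_compO _ _ _ _ _ _ _ hv1
    obtain ⟨n1, hn1, n2, hn2, hvn⟩ := mem_appVars_compO _ _ _ _ _ _ _ hv2
    have h1 : s(m1, n1) ∈ Ψ.dv := hs3 ⟨m, n, m1, n1, hmn, hm1, hn1, rfl⟩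
    have h2 : s(m2, n2) ∈ Θ.dv := ht3 ⟨m1, n1, m2, n2, h1, hm2, hn2, rfl⟩
    have h3 := hτ m2 n2 h2
    rw [Set.eq_empty_iff_forall_notMem] at h3
    exact h3 v ⟨hvm, hvn⟩
  have main := ht _ hleg D hD ?_
  · rw [MF.osubst_compO _ _ _ _ _ _ hq.2] at main
    change FM.Valid D ((Θ.concl.transform i j).osubst τ)
    rw [ht2]
    simpa only [hs2] using main
  · intro h hh
    rw [MF.osubst_compO _ _ _ _ _ _ (hq.1 h hh)]
    have hmem : h.substMF σ ∈ Ψ.hyps := by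
      rw [hs1]
      exact Finset.mem_image_of_mem _ hh
    exact hpre _ hmem _ (ht4 (h.substMF σ)) i j hij τ hτ D hD (by simp [Scheme.transform])
end

section
/- The hypothesis-free scheme with conclusion ∀x∀y z≡t → ∀y∀x z≡t (where x, y, z, t are four distinct variable metavariables) and no DV conditions is not supertrue; consequently, the scheme ALLcomm (∀x∀yφ → ∀y∀xφ) is not supertrue. -/
set_option autoImplicit false

/-- The (0,1)-transform of the scheme is ∀x∀x z≡t → ∀y∀x z≡t, which is false
when y and z are mapped to the same individual variable. -/
theorem not_preST_aux :
    ¬ Scheme.PreST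
        ⟨∅, .imp (.all 0 (.all 1 (.eq 2 3))) (.all 1 (.all 0 (.eq 2 3))), ∅⟩ := by
  intro h
  have h1 := h _ (Or.inl rfl) 0 1 (by simp [Scheme.TLegit])
    ⟨fun n => if n = 2 then 1 else n, fun _ => .eq 0 0⟩
    (by intro m n hmn; simp [Scheme.transform] at hmn) Bool ⟨true⟩
    (by intro f hf; simp [Scheme.transform] at hf) (fun _ => true)
  simp [Scheme.transform, MF.transform, MF.transfAux, MF.osubst, FM.eval] at h1

/-- The instance ∀x∀y z≡t → ∀y∀x z≡t of ALLcomm (with no DV conditions)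
is not supertrue; consequently ALLcomm is not supertrue. -/
theorem ALLcomm_not_supertrue :
    ¬ Scheme.Supertrue
        ⟨∅, .imp (.all 0 (.all 1 (.eq 2 3))) (.all 1 (.all 0 (.eq 2 3))), ∅⟩ ∧
    ¬ ax_ALLcomm.Supertrue := by
  refine ⟨fun h => not_preST_aux (h _ (Or.inl rfl) (by simp)), fun h => not_preST_aux ?_⟩
  refine h ⟨∅, .imp (.all 0 (.all 1 (.eq 2 3))) (.all 1 (.all 0 (.eq 2 3))), ∅⟩
    (Or.inr ⟨⟨id, fun n => if n = 0 then .eq 2 3 else .phi n, by simp, ?_⟩, ?_, ?_, ?_, ?_⟩)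
    (by simp)
  · refine (Set.finite_singleton 0).subset ?_
    intro n hn
    by_contra hne
    have hne' : n ≠ 0 := hne
    simp [hne'] at hn
  · intro m n hmn
    simp [ax_ALLcomm] at hmn
  · simp [ax_ALLcomm]
  · simp [ax_ALLcomm, MF.substMF]
  · rintro q ⟨m', n', m, n, hmn, -⟩
    simp [ax_ALLcomm] at hmn
end
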